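/- arXiv:2605.15917 — 4 statements merged into one kernel-verified Lean document; each statement's English description precedes it below -/
import Mathlib

section
/- For all integers d ≥ 0 and n ≥ d+1 and all real numbers x_1 < x_2 < ⋯ < x_n, the (n−d)×(n−d) matrix A_{d,n}(X) whose (r,i)-entry is h_r(x_i, x_{i+1}, …, x_{i+d}) for 0 ≤ r ≤ n−d−1 and 1 ≤ i ≤ n−d has determinant det A_{d,n}(X) = ∏_{1 ≤ i < j ≤ n, j−i ≥ d+1} (x_j − x_i). In particular A_{d,n}(X) is invertible whenever the nodes x_1, …, x_n are pairwise distinct. -/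
open Finset

/-- The complete homogeneous symmetric polynomial of degree `j` evaluated at
`v : Fin m → ℝ`, i.e. the sum of all monomials of total degree `j` in the
variables `v 0, …, v (m-1)` (with `hsymm 0 v = 1`).  Monotone functions
`Fin j → Fin m` correspond bijectively to the degree-`j` monomials. -/
noncomputable def hsymm {m : ℕ} (j : ℕ) (v : Fin m → ℝ) : ℝ :=
  haveI := Classical.decPred (fun f : Fin j → Fin m => Monotone f)
  ∑ f ∈ Finset.univ.filter (fun f : Fin j → Fin m => Monotone f), ∏ i, v (f i)

lemma hsymm_def' {m : ℕ} (j : ℕ) (v : Fin m → ℝ) [DecidablePred (fun f : Fin j → Fin m => Monotone f)] :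
    hsymm j v = ∑ f ∈ Finset.univ.filter (fun f : Fin j → Fin m => Monotone f), ∏ i, v (f i) := by
  unfold hsymm
  congr!

lemma hsymm_zero' {m : ℕ} (v : Fin m → ℝ) : hsymm 0 v = 1 := by
  classical
  rw [hsymm_def']
  have : (Finset.univ.filter (fun f : Fin 0 → Fin m => Monotone f)) = Finset.univ := by
    ext f
    simp [Subsingleton.monotone]
  rw [this]
  simp

lemma hsymm_first {m : ℕ} (r : ℕ) (v : Fin (m + 1) → ℝ) :
    hsymm (r + 1) v = v 0 * hsymm r v + hsymm (r + 1) (fun i : Fin m => v i.succ) := by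
  classical
  rw [hsymm_def', hsymm_def', hsymm_def', Finset.mul_sum,
    ← Finset.sum_filter_add_sum_filter_not _ (fun f => f 0 = 0)]
  congr 1
  · symm
    refine Finset.sum_nbij (fun g => (Fin.cons 0 g : Fin (r + 1) → Fin (m + 1))) ?_ ?_ ?_ ?_
    · intro g hg
      simp only [mem_filter, mem_univ, true_and] at hg
      simp only [mem_filter, mem_univ, true_and, Fin.cons_zero, and_true]
      intro a b hab
      induction a using Fin.cases with
      | zero => simp
      | succ a =>
        induction b using Fin.cases with
        | zero => exact absurd hab (by simp [Fin.le_def])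
        | succ b => simpa using hg (by simpa using hab)
    · intro g _ g' _ h
      exact Fin.cons_right_injective (α := fun _ => Fin (m + 1)) 0 h
    · intro f hf
      simp only [mem_filter, mem_univ, true_and, coe_filter, Set.mem_ofPred_eq] at hf
      refine ⟨fun i => f i.succ, ?_, ?_⟩
      · simp only [mem_filter, mem_univ, true_and, coe_filter, Set.mem_ofPred_eq]
        exact fun a b hab => hf.1 (by simpa using hab)
      · funext i
        induction i using Fin.cases with
        | zero => simp [hf.2]
        | succ i => simp
    · intro g _
      rw [Fin.prod_univ_succ]
      simp
  · symm
    refine Finset.sum_nbij (fun g => fun i => (g i).succ) ?_ ?_ ?_ ?_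
    · intro g hg
      simp only [mem_filter, mem_univ, true_and] at hg
      simp only [mem_filter, mem_univ, true_and]
      exact ⟨fun a b hab => by simpa using hg hab, Fin.succ_ne_zero _⟩
    · intro g _ g' _ h
      funext i
      exact Fin.succ_injective _ (congrFun h i)
    · intro f hf
      simp only [mem_filter, mem_univ, true_and, coe_filter, Set.mem_ofPred_eq] at hf
      have hne : ∀ i, f i ≠ 0 := by
        intro i hi
        have := hf.1 (Fin.zero_le i)
        rw [hi] at this
        exact hf.2 (by simpa using this)
      refine ⟨fun i => (f i).pred (hne i), ?_, ?_⟩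
      · simp only [mem_filter, mem_univ, true_and, coe_filter, Set.mem_ofPred_eq]
        exact fun a b hab => by simpa using hf.1 hab
      · funext i
        simp
    · intro g _
      rfl

lemma hsymm_last {m : ℕ} (r : ℕ) (v : Fin (m + 1) → ℝ) :
    hsymm (r + 1) v = v (Fin.last m) * hsymm r v + hsymm (r + 1) (fun i : Fin m => v i.castSucc) := by
  classical
  rw [hsymm_def', hsymm_def', hsymm_def', Finset.mul_sum,
    ← Finset.sum_filter_add_sum_filter_not _ (fun f => f (Fin.last r) = Fin.last m)]
  congr 1
  · symm
    refine Finset.sum_nbij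
      (fun g => (Fin.snoc (α := fun _ => Fin (m + 1)) g (Fin.last m) : Fin (r + 1) → Fin (m + 1)))
      ?_ ?_ ?_ ?_
    · intro g hg
      simp only [mem_filter, mem_univ, true_and] at hg
      simp only [mem_filter, mem_univ, true_and, Fin.snoc_last, and_true]
      intro a b hab
      induction b using Fin.lastCases with
      | last => simpa using Fin.le_last _
      | cast b =>
        induction a using Fin.lastCases with
        | last =>
          have h := b.2
          simp only [Fin.le_def, Fin.val_last, Fin.val_castSucc] at hab
          omega
        | cast a => simpa using hg (by simpa using hab)
    · intro g _ g' _ h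
      funext i
      have := congrFun h i.castSucc
      simpa using this
    · intro f hf
      simp only [mem_filter, mem_univ, true_and, coe_filter, Set.mem_ofPred_eq] at hf
      refine ⟨fun i => f i.castSucc, ?_, ?_⟩
      · simp only [mem_filter, mem_univ, true_and, coe_filter, Set.mem_ofPred_eq]
        exact fun a b hab => hf.1 (by simpa using hab)
      · funext i
        induction i using Fin.lastCases with
        | last => simp [hf.2]
        | cast i => simp
    · intro g _
      rw [Fin.prod_univ_castSucc]
      simp [mul_comm]
  · symm
    refine Finset.sum_nbij (fun g => fun i => (g i).castSucc) ?_ ?_ ?_ ?_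
    · intro g hg
      simp only [mem_filter, mem_univ, true_and] at hg
      simp only [mem_filter, mem_univ, true_and]
      exact ⟨fun a b hab => by simpa using hg hab, Fin.castSucc_ne_last _⟩
    · intro g _ g' _ h
      funext i
      exact Fin.castSucc_injective _ (congrFun h i)
    · intro f hf
      simp only [mem_filter, mem_univ, true_and, coe_filter, Set.mem_ofPred_eq] at hf
      have hne : ∀ i, f i ≠ Fin.last m := by
        intro i hi
        have := hf.1 (Fin.le_last i)
        rw [hi] at this
        exact hf.2 (by simpa using this)
      refine ⟨fun i => (f i).castPred (hne i), ?_, ?_⟩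
      · simp only [mem_filter, mem_univ, true_and, coe_filter, Set.mem_ofPred_eq]
        exact fun a b hab => by simpa using hf.1 hab
      · funext i
        simp
    · intro g _
      rfl

lemma hsymm_single (r : ℕ) (v : Fin 1 → ℝ) : hsymm r v = v 0 ^ r := by
  induction r with
  | zero => simp [hsymm_zero']
  | succ r ih =>
    classical
    rw [hsymm_first, ih, hsymm_def' (m := 0)]
    have : IsEmpty (Fin (r + 1) → Fin 0) := ⟨fun f => (f 0).elim0⟩
    simp [pow_succ']

/-- The divided-difference identity. -/
lemma hsymm_diff (x : ℕ → ℝ) (d r i : ℕ) :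
    hsymm (r + 1) (fun k : Fin (d + 1) => x (i + 1 + k)) - hsymm (r + 1) (fun k : Fin (d + 1) => x (i + k))
      = (x (i + d + 1) - x i) * hsymm r (fun k : Fin (d + 1 + 1) => x (i + k)) := by
  have h1 := hsymm_first r (fun k : Fin (d + 1 + 1) => x (i + k))
  have h2 := hsymm_last r (fun k : Fin (d + 1 + 1) => x (i + k))
  simp only [Fin.val_zero, Fin.val_last, Fin.val_succ, Fin.val_castSucc, add_zero] at h1 h2
  have e : (fun k : Fin (d + 1) => x (i + 1 + k)) = fun k : Fin (d + 1) => x (i + (k + 1)) := by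
    funext k
    congr 1
    omega
  rw [e, add_assoc i d 1]
  linarith

/-- The matrix with nodes indexed by `ℕ`. -/
noncomputable def pronyMat (x : ℕ → ℝ) (d m : ℕ) : Matrix (Fin m) (Fin m) ℝ :=
  Matrix.of fun r i => hsymm r.1 (fun k : Fin (d + 1) => x (i.1 + k.1))

lemma pronyMat_det_step (x : ℕ → ℝ) (d k : ℕ) :
    (pronyMat x d (k + 1)).det
      = (∏ i ∈ range k, (x (i + d + 1) - x i)) * (pronyMat x (d + 1) k).det := by
  let B : Matrix (Fin (k + 1)) (Fin (k + 1)) ℝ := Matrix.of fun r i =>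
    Fin.cases (pronyMat x d (k + 1) r 0)
      (fun j => pronyMat x d (k + 1) r j.succ - pronyMat x d (k + 1) r j.castSucc) i
  have hB : (pronyMat x d (k + 1)).det = B.det := by
    refine Matrix.det_eq_of_forall_col_eq_smul_add_pred (fun _ => 1) ?_ ?_
    · intro i
      simp [B]
    · intro i j
      simp [B]
  rw [hB, Matrix.det_succ_row_zero, Fin.sum_univ_succ]
  have h0 : B 0 0 = 1 := by simp [B, pronyMat, hsymm_zero']
  have hs : ∀ j : Fin k, B 0 j.succ = 0 := by
    intro j
    simp [B, pronyMat, hsymm_zero']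
  simp only [h0, hs, Fin.val_zero, pow_zero, mul_zero, zero_mul, Finset.sum_const_zero, add_zero,
    one_mul]
  have : B.submatrix Fin.succ (Fin.succAbove 0)
      = Matrix.of fun r i : Fin k => (x (i.1 + d + 1) - x i.1) * pronyMat x (d + 1) k r i := by
    ext r i
    have := hsymm_diff x d r i
    simpa [B, pronyMat] using this
  rw [this, Matrix.det_mul_row, Finset.prod_range]

lemma pronyMat_det_zero (x : ℕ → ℝ) (k : ℕ) :
    (pronyMat x 0 (k + 1)).det = ∏ j ∈ range k, ∏ i ∈ range (j + 1), (x (j + 0 + 1) - x i) := by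
  have h : pronyMat x 0 (k + 1) = (Matrix.vandermonde (fun i : Fin (k + 1) => x i)).transpose := by
    ext r i
    simp [pronyMat, hsymm_single, Matrix.vandermonde_apply]
  have h2 : ∀ i : Fin (k + 1), ∏ j ∈ Ioi i, (x j - x i)
      = ∏ j ∈ range (k + 1), if i.1 < j then x j - x i else 1 := by
    intro i
    rw [Finset.prod_range, ← Finset.prod_filter]
    refine Finset.prod_congr ?_ fun _ _ => rfl
    ext j
    simp
  rw [h, Matrix.det_transpose, Matrix.det_vandermonde, Finset.prod_congr rfl fun i _ => h2 i,
    ← Finset.prod_range (fun i => ∏ j ∈ range (k + 1), if i < j then x j - x i else 1),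
    Finset.prod_comm, Finset.prod_range_succ']
  simp only [Nat.not_lt_zero, if_false, Finset.prod_const_one, mul_one, add_zero]
  refine Finset.prod_congr rfl fun j hj => ?_
  rw [← Finset.prod_filter]
  refine Finset.prod_congr ?_ fun _ _ => rfl
  ext i
  simp at hj ⊢
  omega

lemma pronyMat_det (x : ℕ → ℝ) (d : ℕ) : ∀ (k : ℕ),
    (∀ i j, i < j → j ≤ d + k → x i < x j) →
    (pronyMat x d (k + 1)).det = ∏ j ∈ range k, ∏ i ∈ range (j + 1), (x (j + d + 1) - x i) := by
  induction d with
  | zero => exact fun k _ => pronyMat_det_zero x k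
  | succ d ih =>
    intro k hx
    have h2 : ∏ j ∈ range (k + 1), ∏ i ∈ range (j + 1), (x (j + d + 1) - x i)
        = (∏ i ∈ range (k + 1), (x (i + d + 1) - x i)) *
          ∏ j ∈ range k, ∏ i ∈ range (j + 1), (x (j + (d + 1) + 1) - x i) := by
      simp only [fun j : ℕ => Finset.prod_range_succ (fun i => x (j + d + 1) - x i) j]
      rw [Finset.prod_mul_distrib, mul_comm]
      congr 1
      rw [Finset.prod_range_succ']
      simp only [Finset.range_zero, Finset.prod_empty, mul_one]
      refine Finset.prod_congr rfl fun j _ => ?_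
      have : j + 1 + d + 1 = j + (d + 1) + 1 := by omega
      rw [this]
    have h3 : (∏ i ∈ range (k + 1), (x (i + d + 1) - x i)) ≠ 0 := by
      refine Finset.prod_ne_zero_iff.2 fun i hi => ?_
      have := hx i (i + d + 1) (by omega) (by simp at hi; omega)
      exact (sub_pos.2 this).ne'
    have h1' := ih (k + 1) (fun i j hij hj => hx i j hij (by omega))
    rw [pronyMat_det_step, h2] at h1'
    exact mul_left_cancel₀ h3 h1'

lemma prod_pairs (x : ℕ → ℝ) (d k : ℕ) :
    ∏ p ∈ Finset.univ.filter
          (fun p : Fin (d + 1 + k) × Fin (d + 1 + k) => p.1.1 + d + 1 ≤ p.2.1), (x p.2 - x p.1)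
      = ∏ j ∈ range k, ∏ i ∈ range (j + 1), (x (j + d + 1) - x i) := by
  rw [Finset.prod_filter, Fintype.prod_prod_type, Finset.prod_comm,
    ← Finset.prod_range (fun j => ∏ i : Fin (d + 1 + k), if i.1 + d + 1 ≤ j then x j - x i else 1),
    Finset.prod_range_add]
  rw [Finset.prod_eq_one, one_mul]
  · refine Finset.prod_congr rfl fun j hj => ?_
    rw [← Finset.prod_range (fun i => if i + d + 1 ≤ d + 1 + j then x (d + 1 + j) - x i else 1),
      ← Finset.prod_filter]
    have e : d + 1 + j = j + d + 1 := by omega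
    rw [e]
    refine Finset.prod_congr ?_ fun _ _ => rfl
    ext i
    simp at hj ⊢
    omega
  · intro j hj
    refine Finset.prod_eq_one fun i _ => ?_
    simp at hj
    rw [if_neg]
    omega

/-- **Determinant of the amplitude-recovery matrix of the higher Prony system.**
For `d ≥ 0`, `n ≥ d+1` and `x_1 < ⋯ < x_n`, the `(n-d)×(n-d)` matrix with
`(r,i)` entry `h_r(x_i, x_{i+1}, …, x_{i+d})` has determinant
`∏_{i<j, j-i ≥ d+1} (x_j - x_i)`; in particular it is invertible. -/
theorem det_higher_prony_matrix (d n : ℕ) (hn : d + 1 ≤ n)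
    (x : Fin n → ℝ) (hx : StrictMono x) :
    (Matrix.of fun r i : Fin (n - d) =>
        hsymm r.1 (fun k : Fin (d + 1) =>
          x ⟨i.1 + k.1, by have h1 := i.2; have h2 := k.2; omega⟩)).det
      = ∏ p ∈ Finset.univ.filter
          (fun p : Fin n × Fin n => p.1.1 + d + 1 ≤ p.2.1), (x p.2 - x p.1)
    ∧ IsUnit (Matrix.of fun r i : Fin (n - d) =>
        hsymm r.1 (fun k : Fin (d + 1) =>
          x ⟨i.1 + k.1, by have h1 := i.2; have h2 := k.2; omega⟩)) := by
  obtain ⟨k, rfl⟩ := Nat.exists_eq_add_of_le hn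
  set y : ℕ → ℝ := fun i => if h : i < d + 1 + k then x ⟨i, h⟩ else 0 with hy
  have hyx : ∀ i : Fin (d + 1 + k), x i = y i := by
    intro i
    simp [hy]
  have hlt : ∀ i j, i < j → j ≤ d + k → y i < y j := by
    intro i j hij hj
    have h1 : i < d + 1 + k := by omega
    have h2 : j < d + 1 + k := by omega
    simp only [hy, h1, h2, dif_pos]
    exact hx (by simpa using hij)
  have hmat : (Matrix.of fun r i : Fin (d + 1 + k - d) =>
        hsymm r.1 (fun l : Fin (d + 1) =>
          x ⟨i.1 + l.1, by have h1 := i.2; have h2 := l.2; omega⟩))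
      = pronyMat y d (d + 1 + k - d) := by
    ext r i
    simp only [hyx, pronyMat]
  have hdet : ∀ m, m = k + 1 → (pronyMat y d m).det
      = ∏ p ∈ Finset.univ.filter
          (fun p : Fin (d + 1 + k) × Fin (d + 1 + k) => p.1.1 + d + 1 ≤ p.2.1),
            (x p.2 - x p.1) := by
    rintro m rfl
    simp only [hyx]
    rw [prod_pairs, pronyMat_det y d k hlt]
  rw [hmat]
  have hd := hdet (d + 1 + k - d) (by omega)
  refine ⟨hd, ?_⟩
  rw [Matrix.isUnit_iff_isUnit_det, hd, isUnit_iff_ne_zero]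
  refine Finset.prod_ne_zero_iff.2 fun p hp => ?_
  have hp' := (Finset.mem_filter.1 hp).2
  have : x p.1 < x p.2 := hx (by rw [Fin.lt_def]; omega)
  exact (sub_pos.2 this).ne'
end

section
/- Let V ⊂ ℝ^d be a finite set whose convex hull P = conv(V) has nonempty interior, and let ν be the pushforward of the Lebesgue measure restricted to P under the projection π(z_1,…,z_d) = z_1. Then ν is absolutely continuous with respect to Lebesgue measure on ℝ, with a nonnegative density ρ supported on the interval [min π(V), max π(V)], and ρ is piecewise polynomial of degree at most d−1 with breakpoints among π(V): for any two consecutive values a < b of π(V) (i.e. no element of π(V) lies strictly between a and b), there is a real polynomial q of degree at most d−1 such that ρ = q almost everywhere on (a, b). -/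
open MeasureTheory Set


lemma hull_range {ι E : Type*} [Fintype ι] [AddCommGroup E] [Module ℝ E] (p : ι → E) (x : E) :
    x ∈ convexHull ℝ (range p) ↔ ∃ w : ι → ℝ, (∀ i, 0 ≤ w i) ∧ ∑ i, w i = 1 ∧ ∑ i, w i • p i = x := by
  classical
  have h : range p = (Fintype.linearCombination ℝ p) '' (range fun i j : ι => if i = j then (1:ℝ) else 0) := by
    rw [← range_comp]
    congr 1
    ext i
    simp [Fintype.linearCombination_apply]
  rw [h, ← LinearMap.image_convexHull, convexHull_basis_eq_stdSimplex]
  constructor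
  · rintro ⟨w, hw, rfl⟩
    exact ⟨w, hw.1, hw.2, rfl⟩
  · rintro ⟨w, h1, h2, rfl⟩
    exact ⟨w, ⟨h1, h2⟩, rfl⟩

/-- `N` agrees with a polynomial of degree at most `n` on `(a,b)`. -/
def PolyOn (n : ℕ) (N : ℝ → ℝ) (a b : ℝ) : Prop :=
  ∃ q : Polynomial ℝ, q.natDegree ≤ n ∧ ∀ t ∈ Ioo a b, N t = q.eval t

lemma PolyOn.cone_aux {n : ℕ} {N : ℝ → ℝ} {a b τ e : ℝ} (h : PolyOn n N a b)
    (hint : ∀ t, IntervalIntegrable (fun r => r ^ n * N (τ + (t - τ) / r)) volume 0 1)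
    (he : e ≠ τ)
    (hc : ∀ t ∈ Ioo a b, 0 < (t - τ) / (e - τ) ∧ (t - τ) / (e - τ) < 1 ∧
      ∀ r, (t - τ) / (e - τ) < r → r < 1 → τ + (t - τ) / r ∈ Ioo a b) :
    PolyOn (n + 1) (fun t => ∫ r in (0:ℝ)..1, r ^ n * N (τ + (t - τ) / r)) a b := by
  obtain ⟨q, hq, hN⟩ := h
  have heτ : e - τ ≠ 0 := sub_ne_zero.2 he
  set q' := q.comp (Polynomial.X + Polynomial.C τ) with hq'
  have hq'd : q'.natDegree ≤ n := by
    rw [hq', Polynomial.natDegree_comp]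
    simpa using hq
  set L : Polynomial ℝ := Polynomial.X - Polynomial.C τ with hL
  set K : Polynomial ℝ := Polynomial.C (e - τ)⁻¹ * L with hK
  set A : ℝ := ∫ r in (0:ℝ)..1, r ^ n * N (τ + (e - τ) / r) with hA
  have hLd : L.natDegree ≤ 1 := by simp [hL]
  have hKd : K.natDegree ≤ 1 := by
    rw [hK]; exact (Polynomial.natDegree_C_mul_le _ _).trans hLd
  refine ⟨Polynomial.C A * K ^ (n + 1) + ∑ j ∈ Finset.range (n + 1),
    Polynomial.C (q'.coeff j / ((n - j : ℕ) + 1)) * (L ^ j * (1 - K ^ (n - j + 1))), ?_, ?_⟩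
  · refine Polynomial.natDegree_add_le_of_degree_le ?_ ?_
    · refine (Polynomial.natDegree_C_mul_le _ _).trans ?_
      refine (Polynomial.natDegree_pow_le_of_le (n+1) hKd).trans (by simp)
    · refine Polynomial.natDegree_sum_le_of_forall_le _ _ fun j hj => ?_
      refine (Polynomial.natDegree_C_mul_le _ _).trans ?_
      have hj' : j ≤ n := by simpa [Nat.lt_succ_iff] using hj
      refine (Polynomial.natDegree_mul_le_of_le (Polynomial.natDegree_pow_le_of_le j hLd)
        (n := n - j + 1) ?_).trans (by omega)
      refine (Polynomial.natDegree_sub_le _ _).trans ?_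
      have := (Polynomial.natDegree_pow_le_of_le (n-j+1) hKd)
      simp; omega
  · intro t ht
    obtain ⟨c0, c1, hr⟩ := hc t ht
    set c := (t - τ) / (e - τ) with hcdef
    have htc : t - τ = c * (e - τ) := by rw [hcdef]; field_simp
    have hKe : K.eval t = c := by simp [hK, hL, hcdef]; field_simp
    have hLe : L.eval t = t - τ := by simp [hL]
    have hsub1 : IntervalIntegrable (fun r => r ^ n * N (τ + (t - τ) / r)) volume 0 c :=
      (hint t).mono_set (by rw [uIcc_of_le c0.le, uIcc_of_le zero_le_one]; exact Icc_subset_Icc_right c1.le)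
    have hsub2 : IntervalIntegrable (fun r => r ^ n * N (τ + (t - τ) / r)) volume c 1 :=
      (hint t).mono_set (by rw [uIcc_of_le c1.le, uIcc_of_le zero_le_one]; exact Icc_subset_Icc_left c0.le)
    show (∫ r in (0:ℝ)..1, r ^ n * N (τ + (t - τ) / r)) = _
    rw [← intervalIntegral.integral_add_adjacent_intervals hsub1 hsub2]
    simp only [Polynomial.eval_add, Polynomial.eval_mul, Polynomial.eval_C, Polynomial.eval_pow, hKe,
      Polynomial.eval_finsetSum, Polynomial.eval_sub, Polynomial.eval_one, hLe]
    congr 1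
    · have := intervalIntegral.mul_integral_comp_mul_left (a := 0) (b := 1) (f := fun r => r ^ n * N (τ + (t - τ) / r)) c
      simp only [mul_zero, mul_one] at this
      rw [← this, pow_succ, hA]
      have h2 : ∀ x : ℝ, (c * x) ^ n * N (τ + (t - τ) / (c * x)) = c ^ n * (x ^ n * N (τ + (e - τ) / x)) := by
        intro x
        rw [htc, mul_div_mul_left _ _ c0.ne']; ring
      simp_rw [h2]
      rw [intervalIntegral.integral_const_mul]; ring
    · have h3 : ∫ r in c..1, r ^ n * N (τ + (t - τ) / r) =
        ∫ r in c..1, ∑ j ∈ Finset.range (n + 1), (q'.coeff j * (t - τ) ^ j) * r ^ (n - j) := by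
        rw [intervalIntegral.integral_of_le c1.le, intervalIntegral.integral_of_le c1.le,
          integral_Ioc_eq_integral_Ioo, integral_Ioc_eq_integral_Ioo]
        refine setIntegral_congr_fun measurableSet_Ioo fun r hr' => ?_
        have hr0 : r ≠ 0 := (c0.trans hr'.1).ne'
        have hev : q.eval (τ + (t - τ) / r) = q'.eval ((t - τ) / r) := by
          simp [hq', add_comm]
        rw [hN _ (hr r hr'.1 hr'.2), hev, Polynomial.eval_eq_sum_range' (Nat.lt_succ_of_le hq'd),
          Finset.mul_sum]
        refine Finset.sum_congr rfl fun j hj => ?_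
        have hj' : j ≤ n := by simpa [Nat.lt_succ_iff] using hj
        have : r ^ n = r ^ j * r ^ (n - j) := by rw [← pow_add]; congr 1; omega
        rw [this, div_pow]; field_simp
      rw [h3, intervalIntegral.integral_finsetSum (fun j _ => (by fun_prop : Continuous _).intervalIntegrable _ _)]
      refine Finset.sum_congr rfl fun j hj => ?_
      rw [intervalIntegral.integral_const_mul, integral_pow]
      simp
      ring

lemma PolyOn.cone {n : ℕ} {N : ℝ → ℝ} {a b τ : ℝ} (hab : a < b) (h : PolyOn n N a b)
    (hint : ∀ t, IntervalIntegrable (fun r => r ^ n * N (τ + (t - τ) / r)) volume 0 1)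
    (hτ : τ ∉ Ioo a b) :
    PolyOn (n + 1) (fun t => ∫ r in (0:ℝ)..1, r ^ n * N (τ + (t - τ) / r)) a b := by
  rcases le_or_gt τ a with h1 | h1
  · refine h.cone_aux (e := b) hint (by linarith) fun t ht => ?_
    have hb : 0 < b - τ := by linarith
    have htτ : 0 < t - τ := by linarith [ht.1]
    have c0 : 0 < (t - τ) / (b - τ) := div_pos htτ hb
    refine ⟨c0, ?_, fun r hr hr1 => ?_⟩
    · rw [div_lt_one hb]; linarith [ht.2]
    · have hr0 := c0.trans hr
      rw [div_lt_iff₀ hb] at hr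
      constructor
      · have : t - τ < (t - τ) / r := by rw [lt_div_iff₀ hr0]; nlinarith
        linarith [ht.1]
      · have : (t - τ) / r < b - τ := by rw [div_lt_iff₀ hr0]; linarith
        linarith
  · have h2 : b ≤ τ := by
      by_contra hh
      exact hτ ⟨h1, not_le.1 hh⟩
    refine h.cone_aux (e := a) hint (by linarith) fun t ht => ?_
    have hb : 0 < τ - a := by linarith
    have htτ : 0 < τ - t := by linarith [ht.2]
    have e : (t - τ) / (a - τ) = (τ - t) / (τ - a) := by rw [← neg_sub τ t, ← neg_sub τ a, neg_div_neg_eq]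
    rw [e]
    have c0 : 0 < (τ - t) / (τ - a) := div_pos htτ hb
    refine ⟨c0, ?_, fun r hr hr1 => ?_⟩
    · rw [div_lt_one hb]; linarith [ht.1]
    · have hr0 := c0.trans hr
      rw [div_lt_iff₀ hb] at hr
      have e2 : (t - τ) / r = - ((τ - t) / r) := by rw [← neg_div, neg_sub]
      rw [e2]
      constructor
      · have : (τ - t) / r < τ - a := by rw [div_lt_iff₀ hr0]; linarith
        linarith
      · have : τ - t < (τ - t) / r := by rw [lt_div_iff₀ hr0]; nlinarith
        linarith [ht.2]

def cornerD (n : ℕ) (h0 : ℝ) (h : Fin n → ℝ) (t : ℝ) : Set (Fin n → ℝ) :=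
  {x | (∀ i, 0 ≤ x i) ∧ ∑ i, x i ≤ 1 ∧ h0 + ∑ i, x i * (h i - h0) ≤ t}

lemma cornerD_closed (n : ℕ) (h0 : ℝ) (h : Fin n → ℝ) (t : ℝ) : IsClosed (cornerD n h0 h t) := by
  have h1 : IsClosed {x : Fin n → ℝ | ∀ i, 0 ≤ x i} := by
    simp only [ofPred_forall]
    exact isClosed_iInter fun i => isClosed_le continuous_const (continuous_apply i)
  refine h1.inter (IsClosed.inter ?_ ?_)
  · exact isClosed_le (f := fun x : Fin n → ℝ => ∑ i, x i) (g := fun _ => (1:ℝ)) (by fun_prop) (by fun_prop)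
  · exact isClosed_le (f := fun x : Fin n → ℝ => h0 + ∑ i, x i * (h i - h0)) (g := fun _ => t)
      (by fun_prop) (by fun_prop)

lemma cornerD_subset (n : ℕ) (h0 : ℝ) (h : Fin n → ℝ) (t : ℝ) : cornerD n h0 h t ⊆ Icc 0 1 := by
  rintro x ⟨h1, h2, -⟩
  refine ⟨h1, fun i => ?_⟩
  exact (Finset.single_le_sum (fun j _ => h1 j) (Finset.mem_univ i)).trans h2

lemma cornerD_vol_le (n : ℕ) (h0 : ℝ) (h : Fin n → ℝ) (t : ℝ) : volume (cornerD n h0 h t) ≤ 1 := by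
  refine (measure_mono (cornerD_subset n h0 h t)).trans ?_
  rw [Real.volume_Icc_pi]
  simp

lemma cornerD_mono (n : ℕ) (h0 : ℝ) (h : Fin n → ℝ) : Monotone fun t => volume (cornerD n h0 h t) :=
  fun _ _ hst => measure_mono fun _ hx => ⟨hx.1, hx.2.1, hx.2.2.trans hst⟩

open scoped Pointwise in
lemma cornerD_slice (n : ℕ) (h0 : ℝ) (h : Fin (n + 1) → ℝ) (t s : ℝ) (hs : s ∈ Ioo (0:ℝ) 1) :
    {y : Fin n → ℝ | Fin.cons s y ∈ cornerD (n + 1) h0 h t} =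
      (1 - s) • cornerD n h0 (fun i => h i.succ) (h 0 + (t - h 0) / (1 - s)) := by
  have hs' : 0 < 1 - s := by linarith [hs.2]
  ext y
  rw [mem_smul_set_iff_inv_smul_mem₀ hs'.ne']
  simp only [cornerD, mem_ofPred_eq, Fin.forall_fin_succ, Fin.cons_zero, Fin.cons_succ, Fin.sum_univ_succ,
    Pi.smul_apply, smul_eq_mul, mul_assoc, ← Finset.mul_sum]
  refine and_congr ?_ (and_congr ?_ ?_)
  · constructor
    · exact fun hh i => mul_nonneg (by positivity) (hh.2 i)
    · refine fun hh => ⟨hs.1.le, fun i => ?_⟩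
      have := hh i
      rwa [mul_nonneg_iff_of_pos_left (by positivity)] at this
  · rw [inv_mul_le_iff₀ hs']
    constructor <;> intro <;> linarith
  · set X := ∑ i, y i * (h i.succ - h0)
    rw [show (h0 + (1 - s)⁻¹ * X ≤ h 0 + (t - h 0) / (1 - s)) ↔
      (1 - s) * (h0 + (1 - s)⁻¹ * X) ≤ (1 - s) * (h 0 + (t - h 0) / (1 - s)) from
      (mul_le_mul_iff_right₀ hs').symm]
    have e1 : (1 - s) * (h0 + (1 - s)⁻¹ * X) = (1 - s) * h0 + X := by field_simp
    have e2 : (1 - s) * (h 0 + (t - h 0) / (1 - s)) = (1 - s) * h 0 + (t - h 0) := by field_simp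
    rw [e1, e2]
    constructor <;> intro <;> linarith

lemma cornerD_fubini (n : ℕ) (h0 : ℝ) (h : Fin (n + 1) → ℝ) (t : ℝ) :
    volume (cornerD (n + 1) h0 h t) = ∫⁻ s in Ioo (0:ℝ) 1, ENNReal.ofReal ((1 - s) ^ n) *
      volume (cornerD n h0 (fun i => h i.succ) (h 0 + (t - h 0) / (1 - s))) := by
  have hm := (cornerD_closed (n + 1) h0 h t).measurableSet
  have hmp := (volume_preserving_piFinSuccAbove (fun _ : Fin (n + 1) => ℝ) 0).symm
  rw [← hmp.measure_preimage hm.nullMeasurableSet, Measure.volume_eq_prod,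
    Measure.prod_apply (hmp.measurable hm)]
  rw [restrict_Ioo_eq_restrict_Icc, ← lintegral_indicator measurableSet_Icc]
  refine lintegral_congr_ae ?_
  have h1 : ∀ᵐ s : ℝ, s ≠ 0 := by simp [ae_iff]
  have h2 : ∀ᵐ s : ℝ, s ≠ 1 := by simp [ae_iff]
  filter_upwards [h1, h2] with s hs0 hs1
  have e : (Prod.mk s ⁻¹' ((MeasurableEquiv.piFinSuccAbove (fun _ : Fin (n + 1) => ℝ) 0).symm ⁻¹'
      cornerD (n + 1) h0 h t)) = {y : Fin n → ℝ | Fin.cons s y ∈ cornerD (n + 1) h0 h t} := by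
    ext y
    simp [MeasurableEquiv.piFinSuccAbove, Fin.insertNthEquiv]
  rw [e]
  by_cases hs : s ∈ Icc (0:ℝ) 1
  · have hs' : s ∈ Ioo (0:ℝ) 1 := ⟨lt_of_le_of_ne hs.1 hs0.symm, lt_of_le_of_ne hs.2 hs1⟩
    rw [indicator_of_mem hs, cornerD_slice n h0 h t s hs', Measure.addHaar_smul]
    congr 2
    rw [abs_of_nonneg (pow_nonneg (by linarith [hs.2]) _)]
    simp
  · rw [indicator_of_notMem hs]
    convert measure_empty (μ := volume)
    rw [eq_empty_iff_forall_notMem]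
    intro y hy
    apply hs
    have := cornerD_subset _ _ _ _ hy
    exact ⟨by simpa using this.1 0, by simpa using this.2 0⟩

noncomputable def cornerN (n : ℕ) (h0 : ℝ) (h : Fin n → ℝ) (t : ℝ) : ℝ := (volume (cornerD n h0 h t)).toReal

lemma cornerN_mono (n : ℕ) (h0 : ℝ) (h : Fin n → ℝ) : Monotone (cornerN n h0 h) := fun _ _ hst =>
  ENNReal.toReal_mono (ne_top_of_le_ne_top ENNReal.one_ne_top (cornerD_vol_le _ _ _ _)) (cornerD_mono n h0 h hst)

lemma cornerN_le (n : ℕ) (h0 : ℝ) (h : Fin n → ℝ) (t : ℝ) : ‖cornerN n h0 h t‖ ≤ 1 := by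
  rw [cornerN, Real.norm_of_nonneg ENNReal.toReal_nonneg]
  exact ENNReal.toReal_mono ENNReal.one_ne_top (cornerD_vol_le n h0 h t)

lemma cornerN_int (n : ℕ) (h0 : ℝ) (h : Fin n → ℝ) (τ t : ℝ) :
    IntervalIntegrable (fun r => r ^ n * cornerN n h0 h (τ + (t - τ) / r)) volume 0 1 := by
  have hm : Measurable fun r => cornerN n h0 h (τ + (t - τ) / r) :=
    (cornerN_mono n h0 h).measurable.comp (by fun_prop)
  rw [intervalIntegrable_iff]
  refine Measure.integrableOn_of_bounded (M := 1) (by simp) (by fun_prop) ?_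
  refine ae_restrict_of_forall_mem measurableSet_uIoc fun r hr => ?_
  rw [uIoc_of_le zero_le_one] at hr
  rw [norm_mul, norm_pow, Real.norm_of_nonneg hr.1.le]
  exact mul_le_one₀ (pow_le_one₀ hr.1.le hr.2) (norm_nonneg _) (cornerN_le _ _ _ _)

lemma cornerN_succ (n : ℕ) (h0 : ℝ) (h : Fin (n + 1) → ℝ) (t : ℝ) :
    cornerN (n + 1) h0 h t = ∫ r in (0:ℝ)..1, r ^ n * cornerN n h0 (fun i => h i.succ) (h 0 + (t - h 0) / r) := by
  have := intervalIntegral.integral_comp_sub_left (a := 0) (b := 1)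
    (fun r => r ^ n * cornerN n h0 (fun i => h i.succ) (h 0 + (t - h 0) / r)) 1
  simp only [sub_self, sub_zero] at this
  rw [← this, intervalIntegral.integral_of_le zero_le_one, integral_Ioc_eq_integral_Ioo, cornerN, cornerD_fubini]
  have hm : Measurable fun s : ℝ => volume (cornerD n h0 (fun i => h i.succ) (h 0 + (t - h 0) / (1 - s))) :=
    (cornerD_mono n h0 fun i => h i.succ).measurable.comp (by fun_prop)
  rw [← integral_toReal (by fun_prop)]
  · refine setIntegral_congr_fun measurableSet_Ioo fun s hs => ?_
    simp only [ENNReal.toReal_mul, cornerN]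
    rw [ENNReal.toReal_ofReal (pow_nonneg (by linarith [hs.2]) _)]
  · refine Filter.Eventually.of_forall fun s => ENNReal.mul_lt_top (by simp) ?_
    exact (cornerD_vol_le _ _ _ _).trans_lt (by simp)

lemma cornerN_poly (n : ℕ) (h0 : ℝ) (h : Fin n → ℝ) {a b : ℝ} (hab : a < b) (hh0 : h0 ∉ Ioo a b)
    (hh : ∀ i, h i ∉ Ioo a b) : PolyOn n (cornerN n h0 h) a b := by
  induction n with
  | zero =>
    rcases le_or_gt h0 a with h1 | h1
    · refine ⟨Polynomial.C (cornerN 0 h0 h b), by simp, fun t ht => ?_⟩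
      simp only [cornerN, cornerD, Polynomial.eval_C, Finset.univ_eq_empty, Finset.sum_empty, add_zero]
      rw [eq_true (show h0 ≤ t by linarith [ht.1]), eq_true (show h0 ≤ b by linarith)]
    · have h2 : b ≤ h0 := by
        by_contra hh
        exact hh0 ⟨h1, not_le.1 hh⟩
      refine ⟨Polynomial.C (cornerN 0 h0 h a), by simp, fun t ht => ?_⟩
      simp only [cornerN, cornerD, Polynomial.eval_C, Finset.univ_eq_empty, Finset.sum_empty, add_zero]
      rw [eq_false (show ¬ h0 ≤ t by linarith [ht.2]), eq_false (show ¬ h0 ≤ a by linarith)]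
  | succ n ih =>
    rw [funext (cornerN_succ n h0 h)]
    exact (ih (fun i => h i.succ) fun i => hh _).cone hab (fun t => cornerN_int n h0 _ _ t) (hh 0)

lemma simplex_poly (d : ℕ) (k : Fin d) (q : Fin (d + 1) → Fin d → ℝ) {a b : ℝ} (hab : a < b)
    (hq : ∀ i, q i k ∉ Ioo a b) :
    PolyOn d (fun t => (volume (convexHull ℝ (range q) ∩ {z | z k ≤ t})).toReal) a b := by
  set f : (Fin d → ℝ) →ₗ[ℝ] (Fin d → ℝ) := Fintype.linearCombination ℝ (fun i => q i.succ - q 0) with hf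
  have key : ∀ t, convexHull ℝ (range q) ∩ {z | z k ≤ t} =
      (fun z => q 0 + z) '' (f '' cornerD d (q 0 k) (fun i => q i.succ k) t) := by
    intro t
    have hval : ∀ x : Fin d → ℝ, q 0 + f x = (1 - ∑ i, x i) • q 0 + ∑ i, x i • q i.succ := by
      intro x
      simp only [hf, Fintype.linearCombination_apply, smul_sub, Finset.sum_sub_distrib, sub_smul, one_smul,
        Finset.sum_smul]
      abel
    have hk : ∀ x : Fin d → ℝ, (q 0 + f x) k = q 0 k + ∑ i, x i * (q i.succ k - q 0 k) := by
      intro x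
      simp [hf, Fintype.linearCombination_apply]
    rw [image_image]
    ext z
    constructor
    · rintro ⟨hz, hzt⟩
      obtain ⟨w, hw0, hw1, rfl⟩ := (hull_range q z).1 hz
      rw [Fin.sum_univ_succ] at hw1
      have e : q 0 + f (fun i => w i.succ) = ∑ i, w i • q i := by
        rw [hval, Fin.sum_univ_succ]
        congr 2
        linarith
      refine ⟨fun i => w i.succ, ⟨fun i => hw0 _, by linarith [hw0 0], ?_⟩, e⟩
      rw [← hk, e]; exact hzt
    · rintro ⟨x, ⟨hx0, hx1, hxt⟩, rfl⟩
      refine ⟨(hull_range q _).2 ⟨Fin.cons (1 - ∑ i, x i) x, ?_, ?_, ?_⟩, ?_⟩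
      · intro i
        refine Fin.cases ?_ (fun i => ?_) i
        · simpa using hx1
        · simpa using hx0 i
      · simp [Fin.sum_univ_succ]
      · simp [Fin.sum_univ_succ, hval]
      · show (q 0 + f x) k ≤ t
        rw [hk]; exact hxt
  obtain ⟨Q, hQd, hQ⟩ := cornerN_poly d (q 0 k) (fun i => q i.succ k) hab (hq 0) (fun i => hq _)
  refine ⟨Polynomial.C |LinearMap.det f| * Q, (Polynomial.natDegree_C_mul_le _ _).trans hQd, fun t ht => ?_⟩
  simp only [key, image_add_left, measure_preimage_add, Measure.addHaar_image_linearMap, ENNReal.toReal_mul]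
  rw [ENNReal.toReal_ofReal (abs_nonneg _)]
  simp only [Polynomial.eval_mul, Polynomial.eval_C, ← hQ t ht, cornerN]

lemma perturb {ι : Type*} [Finite ι] (l c : ι → ℝ) (hl : ∀ i, 0 ≤ l i) (hc : ∀ i, l i = 0 → 0 ≤ c i) :
    ∃ ε > 0, ∀ i, 0 ≤ l i + ε * c i := by
  have : ∀ᶠ ε : ℝ in nhdsWithin 0 (Ioi 0), ∀ i, 0 ≤ l i + ε * c i := by
    rw [Filter.eventually_all]
    intro i
    rcases (hl i).eq_or_lt with h | h
    · filter_upwards [self_mem_nhdsWithin] with ε hε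
      rw [← h, zero_add]
      exact mul_nonneg (le_of_lt hε) (hc i h.symm)
    · have hcont : Filter.Tendsto (fun ε : ℝ => l i + ε * c i) (nhdsWithin 0 (Ioi 0)) (nhds (l i + 0 * c i)) :=
        ((by fun_prop : Continuous fun ε : ℝ => l i + ε * c i).tendsto 0).mono_left nhdsWithin_le_nhds
      filter_upwards [hcont.eventually (lt_mem_nhds (show 0 < l i + 0 * c i by simpa using h))] with ε hε
      exact hε.le
  obtain ⟨ε, h1, h2⟩ := (this.and self_mem_nhdsWithin).exists
  exact ⟨ε, h2, h1⟩

section Tri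
variable {ι E : Type*} [Fintype ι] [NormedAddCommGroup E] [NormedSpace ℝ E] [FiniteDimensional ℝ E]

/-- Generic heights. -/
lemma exists_generic (p : ι → E) : ∃ h : ι → ℝ, ∀ S : Finset ι, affineSpan ℝ (p '' S) = ⊤ →
    ∀ ℓ : E →ᵃ[ℝ] ℝ, (∀ s ∈ S, ℓ (p s) = h s) → ∀ v, ℓ (p v) = h v → v ∈ S := by
  classical
  let I := {x : Finset ι × ι // affineSpan ℝ (p '' x.1) = ⊤ ∧ x.2 ∉ x.1}
  have hw : ∀ x : I, ∃ w : ι → ℝ, ∑ i ∈ x.1.1, w i = 1 ∧ p x.1.2 = x.1.1.affineCombination ℝ p w := by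
    rintro ⟨⟨S, v⟩, hS, hv⟩
    have : p v ∈ affineSpan ℝ (p '' S) := by rw [hS]; trivial
    obtain ⟨fs, w, hfs, h1, h2⟩ := eq_affineCombination_of_mem_affineSpan_image this
    have hfs' : fs ⊆ S := by exact_mod_cast hfs
    refine ⟨(fs : Set ι).indicator w, ?_, ?_⟩
    · rw [Finset.sum_indicator_subset w hfs', h1]
    · rw [h2]
      exact Finset.affineCombination_indicator_subset w p hfs'
  choose w hw1 hw2 using hw
  obtain ⟨h, hh⟩ := Module.Dual.exists_forall_ne_zero_of_forall_exists (K := ℝ) (M := ι → ℝ)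
    (fun x : I => LinearMap.proj x.1.2 - ∑ i ∈ x.1.1, w x i • LinearMap.proj i) (by
      intro x
      refine ⟨Pi.single x.1.2 1, ?_⟩
      have : ∑ i ∈ x.1.1, w x i * (Pi.single x.1.2 (1:ℝ) : ι → ℝ) i = 0 :=
        Finset.sum_eq_zero fun i hi => by
          have hne : i ≠ x.1.2 := fun e => x.2.2 (by rw [← e]; exact hi)
          rw [Pi.single_eq_of_ne hne, mul_zero]
      simp [this])
  refine ⟨h, fun S hS ℓ hℓ v hv => ?_⟩
  by_contra hvS
  apply hh ⟨⟨S, v⟩, hS, hvS⟩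
  have e := hw2 ⟨⟨S, v⟩, hS, hvS⟩
  have e1 := hw1 ⟨⟨S, v⟩, hS, hvS⟩
  simp only at e e1
  have e2 : ℓ (p v) = ∑ i ∈ S, w ⟨⟨S, v⟩, hS, hvS⟩ i * h i := by
    rw [e, Finset.map_affineCombination _ _ _ e1, Finset.affineCombination_eq_linear_combination _ _ _ e1]
    refine Finset.sum_congr rfl fun i hi => ?_
    simp [hℓ i hi]
  simp [← e2, hv]

lemma lp_basis (p : ι → E) (h : ι → ℝ) (x : E) (hx : x ∈ convexHull ℝ (range p))
    (hgen : ∀ S : Finset ι, S.card ≤ Module.finrank ℝ E → x ∉ affineSpan ℝ (p '' S)) :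
    ∃ S : Finset ι, S.card = Module.finrank ℝ E + 1 ∧ affineSpan ℝ (p '' S) = ⊤ ∧
      x ∈ convexHull ℝ (p '' S) ∧
      ∃ ℓ : E →ᵃ[ℝ] ℝ, (∀ s ∈ S, ℓ (p s) = h s) ∧ ∀ v, ℓ (p v) ≤ h v := by
  classical
  let K : Set (ι → ℝ) := stdSimplex ℝ ι ∩ {l | ∑ i, l i • p i = x}
  have hKc : IsCompact K := (isCompact_stdSimplex ℝ ι).inter_right
    (isClosed_eq (f := fun l : ι → ℝ => ∑ i, l i • p i) (g := fun _ => x) (by fun_prop) (by fun_prop))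
  have hKn : K.Nonempty := by
    obtain ⟨w, h1, h2, h3⟩ := (hull_range p x).1 hx
    exact ⟨w, ⟨h1, h2⟩, h3⟩
  let cost : (ι → ℝ) → ℝ := fun l => ∑ i, l i * h i
  have hcc : Continuous cost := by fun_prop
  obtain ⟨l0, hl0K, hl0⟩ := hKc.exists_isMinOn hKn hcc.continuousOn
  let M : Set (ι → ℝ) := K ∩ {l | cost l = cost l0}
  have hMc : IsCompact M := hKc.inter_right (isClosed_eq hcc continuous_const)
  obtain ⟨l, hl⟩ := hMc.extremePoints_nonempty ⟨l0, hl0K, rfl⟩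
  rw [mem_extremePoints_iff_left] at hl
  obtain ⟨⟨⟨⟨hlpos, hlsum⟩, hlx⟩, hlcost⟩, hlext⟩ := hl
  simp only [mem_ofPred_eq] at hlx hlcost
  have hmin : ∀ l' ∈ K, cost l ≤ cost l' := fun l' hl' => by rw [hlcost]; exact hl0 hl'
  have hpertK : ∀ c : ι → ℝ, ∑ i, c i = 0 → ∑ i, c i • p i = 0 → ∀ ε : ℝ,
      (∀ i, 0 ≤ l i + ε * c i) → (l + ε • c) ∈ K ∧ cost (l + ε • c) = cost l + ε * cost c := by
    intro c hc1 hc2 ε hε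
    refine ⟨⟨⟨fun i => by simpa using hε i, ?_⟩, ?_⟩, ?_⟩
    · simp [Finset.sum_add_distrib, hlsum, ← Finset.mul_sum, hc1]
    · simp only [mem_ofPred_eq, Pi.add_apply, Pi.smul_apply, add_smul, Finset.sum_add_distrib, hlx, smul_assoc,
        ← Finset.smul_sum, hc2]
      simp
    · simp [cost, add_mul, Finset.sum_add_distrib, Finset.mul_sum, mul_assoc]
  have hcostc : ∀ c : ι → ℝ, ∑ i, c i = 0 → ∑ i, c i • p i = 0 → (∀ i, l i = 0 → 0 ≤ c i) → 0 ≤ cost c := by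
    intro c hc1 hc2 hc
    obtain ⟨ε, hε, h3⟩ := perturb l c hlpos hc
    obtain ⟨h4, h5⟩ := hpertK c hc1 hc2 ε h3
    have := hmin _ h4
    rw [h5] at this
    exact nonneg_of_mul_nonneg_right (by linarith) hε
  have hindep : ∀ c : ι → ℝ, ∑ i, c i = 0 → ∑ i, c i • p i = 0 → (∀ i, l i = 0 → c i = 0) → c = 0 := by
    intro c hc1 hc2 hc
    have hn1 : ∑ i, (-c) i = 0 := by simp [hc1]
    have hn2 : ∑ i, (-c) i • p i = 0 := by simp [hc2]
    have hn : ∀ i, l i = 0 → 0 ≤ (-c) i := fun i hi => by simp [hc i hi]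
    have c1 := hcostc c hc1 hc2 (fun i hi => (hc i hi).ge)
    have c2 := hcostc (-c) hn1 hn2 hn
    have c3 : cost (-c) = - cost c := by simp [cost]
    have c4 : cost c = 0 := by linarith
    obtain ⟨ε1, hε1, h1⟩ := perturb l c hlpos (fun i hi => (hc i hi).ge)
    obtain ⟨ε2, hε2, h2⟩ := perturb l (-c) hlpos hn
    obtain ⟨k1, m1⟩ := hpertK c hc1 hc2 ε1 h1
    obtain ⟨k2, m2⟩ := hpertK (-c) hn1 hn2 ε2 h2
    have := hlext _ ⟨k1, by simp [m1, c4, hlcost]⟩ _ ⟨k2, by rw [mem_ofPred_eq, m2, c3, c4, hlcost]; simp⟩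
      ⟨ε2 / (ε1 + ε2), ε1 / (ε1 + ε2), by positivity, by positivity, by field_simp; ring, by
        ext i
        simp
        field_simp
        ring⟩
    have h6 : ε1 • c = 0 := by simpa using this
    exact (smul_eq_zero.1 h6).resolve_left hε1.ne'
  let S : Finset ι := Finset.univ.filter fun i => l i ≠ 0
  have hS : ∀ i, i ∉ S ↔ l i = 0 := by intro i; simp [S]
  have hAI : AffineIndependent ℝ (fun i : S => p i) := by
    rw [affineIndependent_iff]
    intro s w hw1 hw2
    let c : ι → ℝ := fun i => if hi : i ∈ S then (if (⟨i, hi⟩ : S) ∈ s then w ⟨i, hi⟩ else 0) else 0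
    have hcS : ∀ i : S, c i = if i ∈ s then w i else 0 := by intro i; simp [c]
    have hc0 : ∀ i, i ∉ S → c i = 0 := by intro i hi; simp [c, hi]
    have t1 : ∑ i, c i = 0 := by
      rw [← Finset.sum_subset (Finset.subset_univ S) (fun i _ hi => hc0 i hi), ← Finset.sum_coe_sort]
      simp only [hcS]
      rw [Finset.sum_ite_mem, Finset.univ_inter]
      exact hw1
    have t2 : ∑ i, c i • p i = 0 := by
      rw [← Finset.sum_subset (Finset.subset_univ S) (fun i _ hi => by simp [hc0 i hi]), ← Finset.sum_coe_sort]
      simp only [hcS, ite_smul, zero_smul]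
      rw [Finset.sum_ite_mem, Finset.univ_inter]
      exact hw2
    have := hindep c t1 t2 fun i hi => hc0 i ((hS i).2 hi)
    intro e he
    have h7 := congrFun this e
    rw [hcS] at h7
    simpa [he] using h7
  have hxS : x ∈ convexHull ℝ (p '' S) := by
    have e : p '' S = range (fun i : S => p i) := by ext; simp
    rw [e, hull_range]
    refine ⟨fun i => l i, fun i => hlpos i, ?_, ?_⟩
    · rw [Finset.sum_coe_sort S l, ← hlsum]
      exact Finset.sum_subset (Finset.subset_univ S) (fun i _ hi => (hS i).1 hi)
    · rw [Finset.sum_coe_sort S (fun i => l i • p i), ← hlx]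
      exact Finset.sum_subset (Finset.subset_univ S) (fun i _ hi => by simp [(hS i).1 hi])
  have hcard : S.card = Module.finrank ℝ E + 1 := by
    have u1 := hAI.card_le_finrank_succ
    have u2 := Submodule.finrank_le (vectorSpan ℝ (range fun i : S => p i))
    rw [Fintype.card_coe] at u1
    have u3 : ¬ S.card ≤ Module.finrank ℝ E := fun hle => hgen S hle (convexHull_subset_affineSpan _ hxS)
    omega
  have eS : p '' S = range (fun i : S => p i) := by ext; simp
  have htop : affineSpan ℝ (range fun i : S => p i) = ⊤ := by
    rw [hAI.affineSpan_eq_top_iff_card_eq_finrank_add_one, Fintype.card_coe, hcard]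
  let B : AffineBasis S ℝ E := ⟨fun i : S => p i, hAI, htop⟩
  have hB : ∀ i : S, B i = p i := fun i => rfl
  let ℓ : E →ᵃ[ℝ] ℝ := ∑ i : S, h i • B.coord i
  have hℓ : ∀ y, ℓ y = ∑ i : S, h i * B.coord i y := by
    intro y
    have : ∀ A : Finset S, (∑ i ∈ A, h i • B.coord i) y = ∑ i ∈ A, h i * B.coord i y := by
      intro A
      induction A using Finset.induction_on with
      | empty => simp
      | insert i A hi ih => rw [Finset.sum_insert hi, Finset.sum_insert hi, ← ih]; simp
    exact this _
  refine ⟨S, hcard, by rw [eS, htop], hxS, ℓ, ?_, ?_⟩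
  · intro s hs
    rw [hℓ, show p s = B ⟨s, hs⟩ from rfl]
    simp [B.coord_apply]
  · intro v
    let μ : ι → ℝ := fun i => if hi : i ∈ S then B.coord ⟨i, hi⟩ (p v) else 0
    have hμS : ∀ i : S, μ i = B.coord i (p v) := by intro i; simp [μ]
    have hμ0 : ∀ i, i ∉ S → μ i = 0 := by intro i hi; simp [μ, hi]
    have s1 : ∑ i, μ i = 1 := by
      rw [← Finset.sum_subset (Finset.subset_univ S) (fun i _ hi => hμ0 i hi), ← Finset.sum_coe_sort]
      simp only [hμS]
      exact B.sum_coord_apply_eq_one _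
    have s2 : ∑ i, μ i • p i = p v := by
      rw [← Finset.sum_subset (Finset.subset_univ S) (fun i _ hi => by simp [hμ0 i hi]), ← Finset.sum_coe_sort]
      simp only [hμS]
      exact B.linear_combination_coord_eq_self _
    have s3 : ∑ i, μ i * h i = ℓ (p v) := by
      rw [← Finset.sum_subset (Finset.subset_univ S) (fun i _ hi => by simp [hμ0 i hi]), ← Finset.sum_coe_sort, hℓ]
      simp only [hμS, mul_comm]
    have := hcostc (Pi.single v 1 - μ) (by simp [s1]) (by simp [sub_smul, s2, Pi.single_apply]) (by
      intro i hi
      simp only [Pi.sub_apply, hμ0 i ((hS i).2 hi), sub_zero]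
      by_cases hiv : i = v
      · subst hiv; simp
      · simp [hiv])
    simp only [cost, Pi.sub_apply, sub_mul, Finset.sum_sub_distrib, s3, Pi.single_apply] at this
    simpa using this

lemma triangulation [MeasurableSpace E] [BorelSpace E] (μ : Measure E) [μ.IsAddHaarMeasure] (p : ι → E) :
    ∃ T : Finset (Finset ι), (∀ S ∈ T, S.card = Module.finrank ℝ E + 1) ∧
      (convexHull ℝ (range p) =ᵐ[μ] ⋃ S ∈ T, convexHull ℝ (p '' S)) ∧
      (T : Set (Finset ι)).Pairwise (Function.onFun (AEDisjoint μ) fun S => convexHull ℝ (p '' S)) := by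
  classical
  obtain ⟨h, hh⟩ := exists_generic p
  let T : Finset (Finset ι) := Finset.univ.filter fun S => S.card = Module.finrank ℝ E + 1 ∧
    affineSpan ℝ (p '' S) = ⊤ ∧ ∃ ℓ : E →ᵃ[ℝ] ℝ, (∀ s ∈ S, ℓ (p s) = h s) ∧ ∀ v, ℓ (p v) ≤ h v
  have hT : ∀ S, S ∈ T ↔ S.card = Module.finrank ℝ E + 1 ∧
    affineSpan ℝ (p '' S) = ⊤ ∧ ∃ ℓ : E →ᵃ[ℝ] ℝ, (∀ s ∈ S, ℓ (p s) = h s) ∧ ∀ v, ℓ (p v) ≤ h v := by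
    intro S; simp [T]
  refine ⟨T, fun S hS => ((hT S).1 hS).1, ?_, ?_⟩
  · have hnull : ∀ᵐ x ∂μ, ∀ S : Finset ι, S.card ≤ Module.finrank ℝ E → x ∉ affineSpan ℝ (p '' S) := by
      rw [ae_all_iff]
      intro S
      by_cases hS : S.card ≤ Module.finrank ℝ E
      · have : affineSpan ℝ (p '' S) ≠ ⊤ := by
          intro htop
          have hne : S.Nonempty := by
            rw [Finset.nonempty_iff_ne_empty]
            rintro rfl
            simp at htop
          obtain ⟨n, hn⟩ : ∃ n, S.card = n + 1 := ⟨S.card - 1, by have := hne.card_pos; omega⟩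
          have h1 := finrank_vectorSpan_image_finset_le ℝ p S hn
          rw [Finset.coe_image, ← direction_affineSpan, htop, AffineSubspace.direction_top, finrank_top] at h1
          omega
        have h0 := Measure.addHaar_affineSubspace μ _ this
        have : ∀ᵐ x ∂μ, x ∉ (affineSpan ℝ (p '' S) : Set E) := measure_eq_zero_iff_ae_notMem.1 h0
        filter_upwards [this] with x hx _ using hx
      · exact Filter.Eventually.of_forall fun x h => absurd h hS
    filter_upwards [hnull] with x hx
    refine propext ⟨fun hxc => ?_, fun hxc => ?_⟩
    · obtain ⟨S, h1, h2, h3, h4⟩ := lp_basis p h x hxc hx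
      exact mem_iUnion₂.2 ⟨S, (hT S).2 ⟨h1, h2, h4⟩, h3⟩
    · obtain ⟨S, _, h3⟩ := mem_iUnion₂.1 hxc
      exact convexHull_mono (image_subset_range _ _) h3
  · intro S hS S' hS' hne
    obtain ⟨c1, t1, ℓ, e1, m1⟩ := (hT S).1 hS
    obtain ⟨c2, t2, ℓ', e2, m2⟩ := (hT S').1 hS'
    have hℓ : ℓ ≠ ℓ' := by
      rintro rfl
      apply hne
      refine (Finset.eq_of_subset_of_card_le (fun s hs => hh S t1 ℓ e1 s (e2 s hs)) (by omega)).symm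
    have key : ∀ (A : Finset ι) (f g : E →ᵃ[ℝ] ℝ), (∀ s ∈ A, f (p s) = h s) → (∀ v, g (p v) ≤ h v) →
        ∀ x ∈ convexHull ℝ (p '' A), g x ≤ f x := by
      intro A f g hf hg x hx
      have hconv : Convex ℝ {y | 0 ≤ (f - g) y} := (convex_Ici (0:ℝ)).affine_preimage (f - g)
      have : convexHull ℝ (p '' A) ⊆ {y | 0 ≤ (f - g) y} := by
        refine convexHull_min ?_ hconv
        rintro _ ⟨s, hs, rfl⟩
        have := hg s
        simp [hf s hs, this]
      simpa using this hx
    have hsub : convexHull ℝ (p '' S) ∩ convexHull ℝ (p '' S') ⊆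
        ((AffineSubspace.mk' (0:ℝ) ⊥).comap (ℓ - ℓ') : Set E) := by
      rintro x ⟨hx, hx'⟩
      have i1 := key S ℓ ℓ' e1 m2 x hx
      have i2 := key S' ℓ' ℓ e2 m1 x hx'
      simp [AffineSubspace.mem_mk', sub_eq_zero, le_antisymm i1 i2]
    refine measure_mono_null hsub (Measure.addHaar_affineSubspace μ _ fun htop => hℓ ?_)
    ext x
    have : x ∈ ((AffineSubspace.mk' (0:ℝ) ⊥).comap (ℓ - ℓ')) := by rw [htop]; trivial
    simpa [AffineSubspace.mem_mk', sub_eq_zero] using this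
end Tri

lemma PolyOn.sum {κ : Type*} (T : Finset κ) (n : ℕ) (N : κ → ℝ → ℝ) (a b : ℝ) (h : ∀ k ∈ T, PolyOn n (N k) a b) :
    PolyOn n (fun t => ∑ k ∈ T, N k t) a b := by
  classical
  choose! q hq1 hq2 using h
  refine ⟨∑ k ∈ T, q k, Polynomial.natDegree_sum_le_of_forall_le _ _ hq1, fun t ht => ?_⟩
  rw [Polynomial.eval_finsetSum]
  exact Finset.sum_congr rfl fun k hk => hq2 k hk t ht

lemma polytope_poly (d : ℕ) (k : Fin d) (V : Finset (Fin d → ℝ)) {a b : ℝ} (hab : a < b)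
    (hV : ∀ z ∈ V, z k ∉ Ioo a b) :
    PolyOn d (fun t => (volume (convexHull ℝ (V : Set (Fin d → ℝ)) ∩ {z | z k ≤ t})).toReal) a b := by
  classical
  obtain ⟨T, hT1, hT2, hT3⟩ := triangulation (volume : Measure (Fin d → ℝ)) (fun v : V => (v : Fin d → ℝ))
  have hrange : range (fun v : V => (v : Fin d → ℝ)) = V := by ext; simp
  rw [hrange] at hT2
  have hmeas : ∀ S : Finset V, MeasurableSet (convexHull ℝ ((fun v : V => (v : Fin d → ℝ)) '' S)) := fun S =>
    ((S.finite_toSet.image _).isCompact_convexHull ℝ).isClosed.measurableSet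
  have hk : ∀ t, MeasurableSet {z : Fin d → ℝ | z k ≤ t} := fun t =>
    measurableSet_le (measurable_pi_apply k) measurable_const
  have key : (fun t => (volume (convexHull ℝ (V : Set (Fin d → ℝ)) ∩ {z | z k ≤ t})).toReal) = fun t =>
      ∑ S ∈ T, (volume (convexHull ℝ ((fun v : V => (v : Fin d → ℝ)) '' S) ∩ {z | z k ≤ t})).toReal := by
    ext t
    rw [measure_congr (hT2.inter (ae_eq_refl {z : Fin d → ℝ | z k ≤ t})), iUnion₂_inter,
      measure_biUnion_finset₀ (fun S hS S' hS' hne => (hT3 hS hS' hne).mono inter_subset_left inter_subset_left)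
        (fun S _ => ((hmeas S).inter (hk t)).nullMeasurableSet), ENNReal.toReal_sum]
    intro S _
    exact ne_top_of_le_ne_top ((S.finite_toSet.image _).isCompact_convexHull ℝ).measure_lt_top.ne
      (measure_mono inter_subset_left)
  rw [key]
  refine PolyOn.sum T d _ a b fun S hS => ?_
  have hc : Fintype.card S = d + 1 := by rw [Fintype.card_coe, hT1 S hS]; simp
  let e : Fin (d + 1) ≃ S := (Fintype.equivFinOfCardEq hc).symm
  have hr : (fun v : V => (v : Fin d → ℝ)) '' S = range (fun i => ((e i : V) : Fin d → ℝ)) := by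
    rw [show (fun i => ((e i : V) : Fin d → ℝ)) = (fun v : S => ((v : V) : Fin d → ℝ)) ∘ e from rfl,
      e.surjective.range_comp]
    ext z; simp
  rw [hr]
  exact simplex_poly d k _ hab fun i => hV _ (e i : V).2

/-- **Projections of polytopes are spline measures.** Let `V ⊂ ℝ^d` be a finite
set whose convex hull `P` has nonempty interior, and let `ν` be the pushforward
of Lebesgue measure restricted to `P` under the first-coordinate projection.
Then `ν` has a nonnegative density `ρ` supported on
`[min π(V), max π(V)]` which is piecewise polynomial of degree at most `d-1`
with breakpoints among the projected vertex coordinates `π(V)`. -/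
theorem polytope_projection_is_spline (d : ℕ) (hd : 0 < d)
    (V : Finset (Fin d → ℝ)) (hV : V.Nonempty)
    (hint : (interior (convexHull ℝ (V : Set (Fin d → ℝ)))).Nonempty) :
    ∃ ρ : ℝ → ℝ,
      (∀ t, 0 ≤ ρ t) ∧
      (Measure.map (fun z : Fin d → ℝ => z ⟨0, hd⟩)
          (volume.restrict (convexHull ℝ (V : Set (Fin d → ℝ))))
        = volume.withDensity fun t => ENNReal.ofReal (ρ t)) ∧
      (∀ t : ℝ, t ∉ Set.Icc (V.inf' hV fun z => z ⟨0, hd⟩)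
          (V.sup' hV fun z => z ⟨0, hd⟩) → ρ t = 0) ∧
      (∀ a b : ℝ, (∃ z ∈ V, z ⟨0, hd⟩ = a) → (∃ z ∈ V, z ⟨0, hd⟩ = b) → a < b →
        (∀ z ∈ V, ¬(a < z ⟨0, hd⟩ ∧ z ⟨0, hd⟩ < b)) →
        ∃ q : Polynomial ℝ, q.natDegree ≤ d - 1 ∧
          ∀ᵐ t ∂(volume : Measure ℝ), t ∈ Set.Ioo a b → ρ t = q.eval t) := by
  set k : Fin d := ⟨0, hd⟩ with hkdef
  set P := convexHull ℝ (V : Set (Fin d → ℝ)) with hP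
  have hPc : IsCompact P := V.finite_toSet.isCompact_convexHull ℝ
  have hPm : MeasurableSet P := hPc.isClosed.measurableSet
  have hπ : Measurable (fun z : Fin d → ℝ => z k) := measurable_pi_apply k
  set ν : Measure ℝ := Measure.map (fun z : Fin d → ℝ => z k) (volume.restrict P) with hν
  have : IsFiniteMeasure (volume.restrict P) := ⟨by simpa using hPc.measure_lt_top⟩
  have : IsFiniteMeasure ν := by rw [hν]; infer_instance
  have hac : ν ≪ volume := by
    have h1 : Measure.map (fun z : Fin d → ℝ => z k) volume ≪ volume :=
      (Measure.quasiMeasurePreserving_eval (fun _ : Fin d => (volume : Measure ℝ)) k).absolutelyContinuous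
    exact (Measure.absolutelyContinuous_of_le (Measure.map_mono Measure.restrict_le_self hπ)).trans h1
  set I := Set.Icc (V.inf' hV fun z => z k) (V.sup' hV fun z => z k) with hI
  have hPI : ∀ z ∈ P, z k ∈ I := by
    have hconv : Convex ℝ {z : Fin d → ℝ | z k ∈ I} :=
      (convex_Icc _ _).linear_preimage (LinearMap.proj k : (Fin d → ℝ) →ₗ[ℝ] ℝ)
    refine fun z hz => convexHull_min (fun v hv => ?_) hconv hz
    exact ⟨Finset.inf'_le (fun z : Fin d → ℝ => z k) hv, Finset.le_sup' (fun z : Fin d → ℝ => z k) hv⟩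
  have hνI : ν.restrict I = ν := by
    refine Measure.restrict_eq_self_of_ae_mem ?_
    refine (ae_map_iff (p := fun x => x ∈ I) hπ.aemeasurable measurableSet_Icc).2 ?_
    exact ae_restrict_of_forall_mem hPm hPI
  set g : ℝ → ENNReal := I.indicator (ν.rnDeriv volume) with hg
  have hgm : Measurable g := (Measure.measurable_rnDeriv ν volume).indicator measurableSet_Icc
  have hνg : ν = volume.withDensity g := by
    rw [hg, withDensity_indicator measurableSet_Icc, ← restrict_withDensity measurableSet_Icc,
      Measure.withDensity_rnDeriv_eq _ _ hac, hνI]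
  have hglt : ∀ᵐ t, g t < ⊤ := by
    filter_upwards [Measure.rnDeriv_lt_top ν volume] with t ht
    by_cases h : t ∈ I
    · simpa [hg, h] using ht
    · simp [hg, h]
  have hνρ : ν = volume.withDensity fun t => ENNReal.ofReal (g t).toReal := by
    rw [hνg]
    refine withDensity_congr_ae ?_
    filter_upwards [hglt] with t ht
    rw [ENNReal.ofReal_toReal ht.ne]
  have hρint : Integrable (fun t => (g t).toReal) := by
    refine integrable_toReal_of_lintegral_ne_top hgm.aemeasurable ?_
    rw [← setLIntegral_univ, ← withDensity_apply _ MeasurableSet.univ, ← hνg]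
    exact measure_ne_top _ _
  refine ⟨fun t => (g t).toReal, fun t => ENNReal.toReal_nonneg, hνρ, fun t ht => ?_, ?_⟩
  · simp [hg, indicator_of_notMem ht]
  intro a b _ _ hab hno
  obtain ⟨Q, hQd, hQ⟩ := polytope_poly d k V hab (fun z hz h => hno z hz h)
  refine ⟨Polynomial.derivative Q, (Polynomial.natDegree_derivative_le Q).trans (by omega), ?_⟩
  have hN : ∀ t, (volume (P ∩ {z | z k ≤ t})).toReal = ∫ u in Iic t, (g u).toReal := by
    intro t
    have : volume (P ∩ {z | z k ≤ t}) = ν (Iic t) := by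
      rw [hν, Measure.map_apply hπ measurableSet_Iic, Measure.restrict_apply (hπ measurableSet_Iic), inter_comm]
      rfl
    rw [this, integral_toReal hgm.aemeasurable (ae_restrict_of_ae hglt), hνg, withDensity_apply _ measurableSet_Iic]
  filter_upwards [LocallyIntegrable.ae_hasDerivAt_integral hρint.locallyIntegrable] with x hx hxab
  have h1 := hx ((a + b) / 2)
  have hm : (a + b) / 2 ∈ Ioo a b := ⟨by linarith, by linarith⟩
  have h2 : HasDerivAt (fun t => Q.eval t - Q.eval ((a + b) / 2)) ((Polynomial.derivative Q).eval x) x :=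
    (Q.hasDerivAt x).sub_const _
  refine h1.unique (h2.congr_of_eventuallyEq ?_)
  filter_upwards [Ioo_mem_nhds hxab.1 hxab.2] with t ht
  rw [← hQ t ht, ← hQ _ hm]
  simp only [← hP, hN]
  rw [intervalIntegral.integral_Iic_sub_Iic hρint.integrableOn hρint.integrableOn]
end

section
/- Let d ≥ 2 and let P ⊂ ℝ^d be a compact convex set with nonempty interior. Define ρ(x) to be the (d−1)-dimensional Lebesgue measure of the slice {z' ∈ ℝ^{d−1} : (x, z') ∈ P}. Then the function x ↦ ρ(x)^{1/(d−1)} is concave on the projection interval {x ∈ ℝ : ∃ z', (x,z') ∈ P}. -/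
open MeasureTheory Set
open scoped ENNReal Pointwise

lemma bm_one {X Y Z : Set ℝ} (hX : MeasurableSet X) (hY : MeasurableSet Y)
    (hXn : X.Nonempty) (hYn : Y.Nonempty) (h : ∀ x ∈ X, ∀ y ∈ Y, x + y ∈ Z) :
    volume X + volume Y ≤ volume Z := by
  have hl : ∀ x ∈ X, volume Y ≤ volume Z := by
    intro x hx
    rw [← measure_preimage_add volume (-x) Y]
    apply measure_mono
    intro z hz
    have := h x hx _ hz
    simpa using this
  have hr : ∀ y ∈ Y, volume X ≤ volume Z := by
    intro y hy
    rw [← measure_preimage_add_right volume (-y) X]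
    apply measure_mono
    intro z hz
    have := h _ hz y hy
    simpa using this
  rcases eq_or_ne (volume X) 0 with h0 | h0
  · obtain ⟨x, hx⟩ := hXn
    simpa [h0] using hl x hx
  rcases eq_or_ne (volume Y) 0 with h1 | h1
  · obtain ⟨y, hy⟩ := hYn
    simpa [h1] using hr y hy
  refine le_of_forall_lt fun c hc => ?_
  obtain ⟨a, ha, b, hb, hcab⟩ := ENNReal.exists_lt_add_of_lt_add hc h0 h1
  refine hcab.trans_le ?_
  obtain ⟨K, hKX, hK, haK⟩ := hX.exists_lt_isCompact ha
  obtain ⟨L, hLY, hL, hbL⟩ := hY.exists_lt_isCompact hb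
  have hKn : K.Nonempty := nonempty_of_measure_ne_zero (ne_bot_of_gt haK)
  have hLn : L.Nonempty := nonempty_of_measure_ne_zero (ne_bot_of_gt hbL)
  have hk := hK.isGreatest_sSup hKn
  have hm := hL.isLeast_sInf hLn
  set k := sSup K
  set m := sInf L
  set A : Set ℝ := (fun z => z + (-m)) ⁻¹' K
  set B : Set ℝ := (fun z => (-k) + z) ⁻¹' L
  have hA : volume A = volume K := measure_preimage_add_right volume (-m) K
  have hB : volume B = volume L := measure_preimage_add volume (-k) L
  have hAB : volume (A ∩ B) = 0 := by
    refine measure_mono_null (t := {k + m}) ?_ (by simp)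
    rintro z ⟨hz1, hz2⟩
    have e1 := hk.2 hz1
    have e2 := hm.2 hz2
    simp only [mem_singleton_iff]
    linarith
  have hBm : MeasurableSet B := hL.measurableSet.preimage (by fun_prop)
  calc a + b ≤ volume A + volume B := by rw [hA, hB]; gcongr
    _ = volume (A ∪ B) := by rw [← measure_union_add_inter A hBm, hAB, add_zero]
    _ ≤ volume Z := by
      apply measure_mono
      rintro z (hz | hz)
      · simpa using h _ (hKX hz) _ (hLY hm.1)
      · simpa using h _ (hKX hk.1) _ (hLY hz)

lemma bm_one_smul {X Y Z : Set ℝ} {s t : ℝ} (hs : 0 < s) (ht : 0 < t)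
    (hX : MeasurableSet X) (hY : MeasurableSet Y)
    (hXn : X.Nonempty) (hYn : Y.Nonempty) (h : ∀ x ∈ X, ∀ y ∈ Y, s * x + t * y ∈ Z) :
    ENNReal.ofReal s * volume X + ENNReal.ofReal t * volume Y ≤ volume Z := by
  have := bm_one (X := s • X) (Y := t • Y) (Z := Z) (hX.const_smul_of_ne_zero hs.ne')
    (hY.const_smul_of_ne_zero ht.ne') hXn.smul_set hYn.smul_set ?_
  · simpa [Measure.addHaar_smul, abs_of_pos hs, abs_of_pos ht] using this
  · rintro _ ⟨x, hx, rfl⟩ _ ⟨y, hy, rfl⟩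
    exact h x hx y hy

lemma layer {f : ℝ → ℝ≥0∞} (hf : Measurable f) (h1 : ∀ x, f x ≤ 1) :
    ∫⁻ x, f x = ∫⁻ r in Ioi (0 : ℝ), volume {x | ENNReal.ofReal r < f x} := by
  have hfin : ∀ x, f x ≠ ⊤ := fun x => ne_top_of_le_ne_top ENNReal.one_ne_top (h1 x)
  have := lintegral_eq_lintegral_meas_lt (volume : Measure ℝ) (f := fun x => (f x).toReal)
    (Filter.Eventually.of_forall fun x => ENNReal.toReal_nonneg) hf.ennreal_toReal.aemeasurable
  simp only [ENNReal.ofReal_toReal (hfin _)] at this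
  rw [this]
  refine setLIntegral_congr_fun measurableSet_Ioi fun r hr => ?_
  simp only [ENNReal.ofReal_lt_iff_lt_toReal (le_of_lt hr) (hfin _)]

lemma amgm (a b : ℝ≥0∞) {s t : ℝ} (hs : 0 < s) (ht : 0 < t) (hst : s + t = 1) :
    a ^ s * b ^ t ≤ ENNReal.ofReal s * a + ENNReal.ofReal t * b := by
  have hpq : (s⁻¹).HolderConjugate t⁻¹ := by
    rw [Real.holderConjugate_iff]
    refine ⟨(one_lt_inv₀ hs).2 (by linarith), by simpa⟩
  have := ENNReal.young_inequality (a ^ s) (b ^ t) hpq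
  rw [← ENNReal.rpow_mul, ← ENNReal.rpow_mul, mul_inv_cancel₀ hs.ne', mul_inv_cancel₀ ht.ne',
    ENNReal.ofReal_inv_of_pos hs, ENNReal.ofReal_inv_of_pos ht] at this
  simpa [div_eq_mul_inv, mul_comm] using this

lemma pl_one_norm {f g h : ℝ → ℝ≥0∞} {s t : ℝ} (hs : 0 < s) (ht : 0 < t) (hst : s + t = 1)
    (hf : Measurable f) (hg : Measurable g) (hh : Measurable h)
    (hf1 : ⨆ x, f x = 1) (hg1 : ⨆ x, g x = 1)
    (H : ∀ x y, f x ^ s * g y ^ t ≤ h (s * x + t * y)) :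
    (∫⁻ x, f x) ^ s * (∫⁻ x, g x) ^ t ≤ ∫⁻ x, h x := by
  have hf1' : ∀ x, f x ≤ 1 := fun x => hf1 ▸ le_iSup f x
  have hg1' : ∀ x, g x ≤ 1 := fun x => hg1 ▸ le_iSup g x
  refine (amgm _ _ hs ht hst).trans ?_
  have hle : ∫⁻ x, min (h x) 1 ≤ ∫⁻ x, h x := lintegral_mono fun x => min_le_left _ _
  refine le_trans ?_ hle
  have hmf : Measurable fun r : ℝ => volume {x | ENNReal.ofReal r < f x} :=
    Antitone.measurable fun a b hab => measure_mono fun x hx =>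
      (ENNReal.ofReal_le_ofReal hab).trans_lt hx
  rw [layer hf hf1', layer hg hg1', layer (f := fun x => min (h x) 1) (by fun_prop)
    (fun x => min_le_right _ _), ← lintegral_const_mul' _ _ ENNReal.ofReal_ne_top,
    ← lintegral_const_mul' _ _ ENNReal.ofReal_ne_top, ← lintegral_add_left (by fun_prop)]
  refine setLIntegral_mono' measurableSet_Ioi fun r hr => ?_
  rcases le_or_gt 1 (ENNReal.ofReal r) with h1 | h1
  · have e1 : {x | ENNReal.ofReal r < f x} = ∅ := by
      ext x; simpa using (hf1' x).trans h1
    have e2 : {x | ENNReal.ofReal r < g x} = ∅ := by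
      ext x; simpa using (hg1' x).trans h1
    simp [e1, e2]
  · refine bm_one_smul hs ht (hf measurableSet_Ioi) (hg measurableSet_Ioi) ?_ ?_ ?_
    · exact lt_iSup_iff.1 (hf1 ▸ h1)
    · exact lt_iSup_iff.1 (hg1 ▸ h1)
    · intro x hx y hy
      refine lt_min (lt_of_lt_of_le ?_ (H x y)) h1
      simp only [mem_ofPred_eq] at hx hy
      have hr0 : ENNReal.ofReal r ≠ 0 := by simpa using hr
      calc ENNReal.ofReal r = ENNReal.ofReal r ^ s * ENNReal.ofReal r ^ t := by
            rw [← ENNReal.rpow_add _ _ hr0 ENNReal.ofReal_ne_top, hst, ENNReal.rpow_one]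
        _ < _ := ENNReal.mul_lt_mul (ENNReal.rpow_lt_rpow hx hs) (ENNReal.rpow_lt_rpow hy ht)

lemma pl_one_bdd {f g h : ℝ → ℝ≥0∞} {s t : ℝ} (hs : 0 < s) (ht : 0 < t) (hst : s + t = 1)
    (hf : Measurable f) (hg : Measurable g) (hh : Measurable h)
    (hf1 : ⨆ x, f x ≠ ⊤) (hg1 : ⨆ x, g x ≠ ⊤)
    (H : ∀ x y, f x ^ s * g y ^ t ≤ h (s * x + t * y)) :
    (∫⁻ x, f x) ^ s * (∫⁻ x, g x) ^ t ≤ ∫⁻ x, h x := by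
  set M := ⨆ x, f x with hM
  set N := ⨆ x, g x with hN
  rcases eq_or_ne M 0 with h0 | h0
  · have : ∀ x, f x = 0 := by simpa [hM] using h0
    simp [this, hs]
  rcases eq_or_ne N 0 with h1 | h1
  · have : ∀ x, g x = 0 := by simpa [hN] using h1
    simp [this, ht]
  have key := pl_one_norm (f := fun x => M⁻¹ * f x) (g := fun x => N⁻¹ * g x)
    (h := fun x => (M⁻¹ ^ s * N⁻¹ ^ t) * h x) hs ht hst (by fun_prop) (by fun_prop) (by fun_prop)
    (by rw [← ENNReal.mul_iSup, ← hM, ENNReal.inv_mul_cancel h0 hf1])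
    (by rw [← ENNReal.mul_iSup, ← hN, ENNReal.inv_mul_cancel h1 hg1])
    (fun x y => by
      rw [ENNReal.mul_rpow_of_nonneg _ _ hs.le, ENNReal.mul_rpow_of_nonneg _ _ ht.le, mul_mul_mul_comm]
      gcongr
      exact H x y)
  have c1 : M⁻¹ ^ s * N⁻¹ ^ t ≠ 0 := by
    simp [ENNReal.rpow_eq_zero_iff, hf1, hg1, hs, ht, hs.not_gt, ht.not_gt]
  have c2 : M⁻¹ ^ s * N⁻¹ ^ t ≠ ⊤ := by
    apply ENNReal.mul_ne_top <;> apply ENNReal.rpow_ne_top_of_nonneg <;>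
      simp [hs.le, ht.le, h0, h1]
  rw [lintegral_const_mul _ hf, lintegral_const_mul _ hg, lintegral_const_mul _ hh,
    ENNReal.mul_rpow_of_nonneg _ _ hs.le, ENNReal.mul_rpow_of_nonneg _ _ ht.le, mul_mul_mul_comm,
    ENNReal.mul_le_mul_iff_right c1 c2] at key
  exact key

lemma tendsto_trunc {f : ℝ → ℝ≥0∞} (hf : Measurable f) :
    Filter.Tendsto (fun n : ℕ => ∫⁻ x, min (f x) n) Filter.atTop (nhds (∫⁻ x, f x)) := by
  refine lintegral_tendsto_of_tendsto_of_monotone (fun n => by fun_prop) ?_ ?_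
  · refine Filter.Eventually.of_forall fun x a b hab => ?_
    dsimp only
    gcongr
  · refine Filter.Eventually.of_forall fun x => ?_
    have := (tendsto_const_nhds (x := f x)).min ENNReal.tendsto_nat_nhds_top
    simpa using this

lemma pl_one {f g h : ℝ → ℝ≥0∞} {s t : ℝ} (hs : 0 < s) (ht : 0 < t) (hst : s + t = 1)
    (hf : Measurable f) (hg : Measurable g) (hh : Measurable h)
    (H : ∀ x y, f x ^ s * g y ^ t ≤ h (s * x + t * y)) :
    (∫⁻ x, f x) ^ s * (∫⁻ x, g x) ^ t ≤ ∫⁻ x, h x := by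
  rcases eq_or_ne (∫⁻ x, f x) 0 with h0 | h0
  · simp [h0, hs]
  rcases eq_or_ne (∫⁻ x, g x) 0 with h1 | h1
  · simp [h1, ht]
  have T := ENNReal.Tendsto.mul ((tendsto_trunc hf).ennrpow_const s) 
    (Or.inl (by simp [ENNReal.rpow_eq_zero_iff, h0, hs.not_gt]))
    ((tendsto_trunc hg).ennrpow_const t)
    (Or.inl (by simp [ENNReal.rpow_eq_zero_iff, h1, ht.not_gt]))
  refine le_of_tendsto' T fun n => ?_
  refine pl_one_bdd hs ht hst (by fun_prop) (by fun_prop) hh ?_ ?_ ?_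
  · exact ne_top_of_le_ne_top (ENNReal.natCast_ne_top n) (iSup_le fun x => min_le_right _ _)
  · exact ne_top_of_le_ne_top (ENNReal.natCast_ne_top n) (iSup_le fun x => min_le_right _ _)
  · intro x y
    refine le_trans ?_ (H x y)
    gcongr <;> exact min_le_left _ _

lemma succ_symm {n : ℕ} (p : ℝ × (Fin n → ℝ)) :
    (MeasurableEquiv.piFinSuccAbove (fun _ : Fin (n + 1) => ℝ) 0).symm p
      = (Fin.cons p.1 p.2 : Fin (n + 1) → ℝ) := by
  ext i
  refine Fin.cases ?_ (fun j => ?_) i <;> simp [MeasurableEquiv.piFinSuccAbove]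

lemma lint_succ {n : ℕ} {f : (Fin (n + 1) → ℝ) → ℝ≥0∞} (hf : Measurable f) :
    ∫⁻ x, f x = ∫⁻ a : ℝ, ∫⁻ v : Fin n → ℝ, f (Fin.cons a v) := by
  have mp := (volume_preserving_piFinSuccAbove (fun _ : Fin (n + 1) => ℝ) 0).symm
  rw [← mp.lintegral_comp hf, Measure.volume_eq_prod, lintegral_prod]
  · simp only [succ_symm]
  · exact (hf.comp mp.measurable).aemeasurable

lemma meas_cons (n : ℕ) : Measurable fun p : ℝ × (Fin n → ℝ) => (Fin.cons p.1 p.2 : Fin (n + 1) → ℝ) := by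
  have := (volume_preserving_piFinSuccAbove (fun _ : Fin (n + 1) => ℝ) 0).symm.measurable
  simpa only [funext (succ_symm (n := n))] using this

lemma pl {n : ℕ} {f g h : (Fin n → ℝ) → ℝ≥0∞} {s t : ℝ} (hs : 0 < s) (ht : 0 < t)
    (hst : s + t = 1) (hf : Measurable f) (hg : Measurable g) (hh : Measurable h)
    (H : ∀ x y, f x ^ s * g y ^ t ≤ h (s • x + t • y)) :
    (∫⁻ x, f x) ^ s * (∫⁻ x, g x) ^ t ≤ ∫⁻ x, h x := by
  induction n with
  | zero =>
    have e : ∀ k : (Fin 0 → ℝ) → ℝ≥0∞, ∫⁻ x, k x = k 0 := fun k => by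
      rw [lintegral_unique]
      simp only [volume_pi, Measure.pi_empty_univ, mul_one]
      exact congrArg k (Subsingleton.elim _ _)
    simpa [e] using H 0 0
  | succ n ih =>
    have hf' := hf.comp (meas_cons n)
    have hg' := hg.comp (meas_cons n)
    have hh' := hh.comp (meas_cons n)
    rw [lint_succ hf, lint_succ hg, lint_succ hh]
    refine pl_one hs ht hst hf'.lintegral_prod_right' hg'.lintegral_prod_right'
      hh'.lintegral_prod_right' fun a b => ?_
    refine ih (hf'.comp measurable_prodMk_left) (hg'.comp measurable_prodMk_left)
      (hh'.comp measurable_prodMk_left) fun x y => ?_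
    convert H (Fin.cons a x) (Fin.cons b y) using 2
    ext i
    refine Fin.cases ?_ (fun j => ?_) i <;> simp

lemma pl_set {n : ℕ} {A B C : Set (Fin n → ℝ)} {s t : ℝ} (hs : 0 < s) (ht : 0 < t)
    (hst : s + t = 1) (hA : MeasurableSet A) (hB : MeasurableSet B) (hC : MeasurableSet C)
    (H : ∀ x ∈ A, ∀ y ∈ B, s • x + t • y ∈ C) :
    volume A ^ s * volume B ^ t ≤ volume C := by
  have := pl (f := A.indicator 1) (g := B.indicator 1) (h := C.indicator 1) hs ht hst
    (measurable_one.indicator hA) (measurable_one.indicator hB) (measurable_one.indicator hC) ?_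
  · simpa [lintegral_indicator_one, hA, hB, hC] using this
  · intro x y
    by_cases hx : x ∈ A
    · by_cases hy : y ∈ B
      · simp [hx, hy, H x hx y hy]
      · simp [hy, ht]
    · simp [hx, hs]

/-- Brunn-Minkowski, `A`, `B` of volume `a ^ n`, `b ^ n`. -/
lemma bm_pos {n : ℕ} {A B C : Set (Fin n → ℝ)} {s t a b : ℝ} (hs : 0 < s) (ht : 0 < t)
    (ha : 0 < a) (hb : 0 < b)
    (hA : MeasurableSet A) (hB : MeasurableSet B) (hC : MeasurableSet C)
    (hAa : volume A = ENNReal.ofReal (a ^ n)) (hBb : volume B = ENNReal.ofReal (b ^ n))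
    (H : ∀ x ∈ A, ∀ y ∈ B, s • x + t • y ∈ C) :
    ENNReal.ofReal ((s * a + t * b) ^ n) ≤ volume C := by
  have hc : 0 < s * a + t * b := by positivity
  set c := s * a + t * b with hcdef
  have sc : ∀ (r : ℝ), 0 < r → ∀ D : Set (Fin n → ℝ),
      volume (r⁻¹ • D) = (ENNReal.ofReal (r ^ n))⁻¹ * volume D := by
    intro r hr D
    rw [Measure.addHaar_smul, Module.finrank_fin_fun, abs_of_pos (by positivity), inv_pow,
      ENNReal.ofReal_inv_of_pos (by positivity)]
  have key := pl_set (A := a⁻¹ • A) (B := b⁻¹ • B) (C := c⁻¹ • C) (s := s * a / c)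
    (t := t * b / c) (by positivity) (by positivity) (by rw [← add_div, div_self hc.ne'])
    (hA.const_smul_of_ne_zero (by positivity)) (hB.const_smul_of_ne_zero (by positivity))
    (hC.const_smul_of_ne_zero (by positivity)) ?_
  · have p : ∀ r : ℝ, 0 < r → ENNReal.ofReal (r ^ n) ≠ 0 := fun r hr => by
      simpa using pow_pos hr n
    rw [sc a ha, sc b hb, sc c hc, hAa, hBb, ENNReal.inv_mul_cancel (p a ha) ENNReal.ofReal_ne_top,
      ENNReal.inv_mul_cancel (p b hb) ENNReal.ofReal_ne_top, ENNReal.one_rpow, ENNReal.one_rpow,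
      one_mul, mul_comm, ← div_eq_mul_inv,
      ENNReal.le_div_iff_mul_le (Or.inl (p c hc)) (Or.inl ENNReal.ofReal_ne_top), one_mul] at key
    exact key
  · rintro _ ⟨x, hx, rfl⟩ _ ⟨y, hy, rfl⟩
    refine ⟨_, H x hx y hy, ?_⟩
    simp only [smul_add, smul_smul]
    congr 2 <;> field_simp

/-- Brunn-Minkowski for nonempty measurable sets. -/
lemma bm {n : ℕ} (hn : n ≠ 0) {A B C : Set (Fin n → ℝ)} {s t : ℝ} (hs : 0 < s) (ht : 0 < t)
    (hA : MeasurableSet A) (hB : MeasurableSet B) (hC : MeasurableSet C)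
    (hAn : A.Nonempty) (hBn : B.Nonempty)
    (hAf : volume A ≠ ⊤) (hBf : volume B ≠ ⊤) (hCf : volume C ≠ ⊤)
    (H : ∀ x ∈ A, ∀ y ∈ B, s • x + t • y ∈ C) :
    s * (volume A).toReal ^ ((n : ℝ)⁻¹) + t * (volume B).toReal ^ ((n : ℝ)⁻¹)
      ≤ (volume C).toReal ^ ((n : ℝ)⁻¹) := by
  have repr : ∀ D : Set (Fin n → ℝ), volume D ≠ ⊤ →
      volume D = ENNReal.ofReal (((volume D).toReal ^ ((n : ℝ)⁻¹)) ^ n) := by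
    intro D hD
    rw [Real.rpow_inv_natCast_pow ENNReal.toReal_nonneg hn, ENNReal.ofReal_toReal hD]
  have ha : 0 ≤ (volume A).toReal ^ ((n : ℝ)⁻¹) := by positivity
  have hb : 0 ≤ (volume B).toReal ^ ((n : ℝ)⁻¹) := by positivity
  have hc : 0 ≤ (volume C).toReal ^ ((n : ℝ)⁻¹) := by positivity
  have rA := repr A hAf
  have rB := repr B hBf
  have rC := repr C hCf
  generalize (volume A).toReal ^ ((n : ℝ)⁻¹) = a at *
  generalize (volume B).toReal ^ ((n : ℝ)⁻¹) = b at *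
  generalize (volume C).toReal ^ ((n : ℝ)⁻¹) = c at *
  have fin : ENNReal.ofReal ((s * a + t * b) ^ n) ≤ volume C → s * a + t * b ≤ c := by
    intro h
    rw [rC, ENNReal.ofReal_le_ofReal_iff (by positivity)] at h
    exact le_of_pow_le_pow_left₀ hn hc h
  apply fin
  have tr : ∀ (r : ℝ), 0 < r → ∀ (v : Fin n → ℝ) (D : Set (Fin n → ℝ)) (e : ℝ), 
      volume D = ENNReal.ofReal (e ^ n) → (∀ x ∈ D, v + r • x ∈ C) →
      ENNReal.ofReal ((r * e) ^ n) ≤ volume C := by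
    intro r hr v D e hD h
    have e1 : volume (r • D) = ENNReal.ofReal ((r * e) ^ n) := by
      rw [Measure.addHaar_smul, Module.finrank_fin_fun, abs_of_pos (by positivity), hD, mul_pow,
        ENNReal.ofReal_mul (by positivity)]
    rw [← e1, ← measure_preimage_add volume (-v) (r • D)]
    apply measure_mono
    rintro z ⟨x, hx, hxz⟩
    have := h x hx
    simp only at hxz
    rw [hxz] at this
    simpa using this
  rcases ha.eq_or_lt with rfl | ha
  · obtain ⟨x, hx⟩ := hAn
    simpa using tr t ht (s • x) B b rB (fun y hy => H x hx y hy)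
  rcases hb.eq_or_lt with rfl | hb
  · obtain ⟨y, hy⟩ := hBn
    simpa using tr s hs (t • y) A a rA (fun x hx => by rw [add_comm]; exact H x hx y hy)
  exact bm_pos hs ht ha hb hA hB hC rA rB H

theorem slice_volume_power_concave (d : ℕ) (hd : 2 ≤ d)
    (P : Set (ℝ × (Fin (d - 1) → ℝ))) (hPc : IsCompact P) (hPv : Convex ℝ P)
    (hPi : (interior P).Nonempty) :
    ConcaveOn ℝ (Prod.fst '' P)
      (fun x : ℝ =>
        (volume {z' : Fin (d - 1) → ℝ | (x, z') ∈ P}).toReal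
          ^ (((d : ℝ) - 1)⁻¹)) := by
  have hcast : (d : ℝ) - 1 = ((d - 1 : ℕ) : ℝ) := by
    rw [Nat.cast_sub (by omega)]; simp
  have hcl : ∀ x : ℝ, IsClosed {z' : Fin (d - 1) → ℝ | (x, z') ∈ P} := fun x =>
    hPc.isClosed.preimage (by fun_prop)
  have hcomp : ∀ x : ℝ, IsCompact {z' : Fin (d - 1) → ℝ | (x, z') ∈ P} := fun x =>
    (hPc.image continuous_snd).of_isClosed_subset (hcl x) fun z hz => ⟨(x, z), hz, rfl⟩
  rw [hcast, concaveOn_iff_forall_pos]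
  refine ⟨hPv.linear_image (LinearMap.fst ℝ ℝ (Fin (d - 1) → ℝ)), ?_⟩
  rintro _ ⟨⟨x, u⟩, hu, rfl⟩ _ ⟨⟨y, v⟩, hv, rfl⟩ s t hs ht hst
  refine bm (by omega) hs ht (hcl _).measurableSet (hcl _).measurableSet (hcl _).measurableSet
    ⟨u, hu⟩ ⟨v, hv⟩ (hcomp _).measure_lt_top.ne (hcomp _).measure_lt_top.ne
    (hcomp _).measure_lt_top.ne ?_
  intro z hz w hw
  exact hPv hz hw hs.le ht.le hst
end

section
/- Let u, v ∈ ℝ² be linearly independent and let A and B be multisets of n real numbers. Then the set of configurations f : Fin n → ℝ² such that the multiset {⟨f(i), u⟩ : i ∈ Fin n} equals A and the multiset {⟨f(i), v⟩ : i ∈ Fin n} equals B is finite. In particular, two projected datasets in linearly independent directions determine the support configuration of an n-point atomic measure in ℝ² up to at most finitely many possibilities. -/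
open RealInnerProductSpace

/-- **Finite ambiguity from two generic projections.** Let `u, v ∈ ℝ²` be
linearly independent and let `A`, `B` be multisets of reals. The set of
configurations `f : Fin n → ℝ²` whose projected multiset in direction `u` is
`A` and in direction `v` is `B` is finite. -/
theorem two_projections_finite_ambiguity (n : ℕ)
    (u v : EuclideanSpace ℝ (Fin 2)) (huv : LinearIndependent ℝ ![u, v])
    (A B : Multiset ℝ) :
    {f : Fin n → EuclideanSpace ℝ (Fin 2) |
        Multiset.map (fun i => ⟪f i, u⟫) (Finset.univ : Finset (Fin n)).val = A ∧
        Multiset.map (fun i => ⟪f i, v⟫) (Finset.univ : Finset (Fin n)).val = B}.Finite := by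
  classical
  have hspan : Submodule.span ℝ (Set.range ![u, v]) = ⊤ :=
    huv.span_eq_top_of_card_eq_finrank (by simp)
  have hinj : Function.Injective
      (fun x : EuclideanSpace ℝ (Fin 2) => ((⟪x, u⟫ : ℝ), (⟪x, v⟫ : ℝ))) := by
    intro x y hxy
    have h1 : (⟪x, u⟫ : ℝ) = ⟪y, u⟫ := congrArg Prod.fst hxy
    have h2 : (⟪x, v⟫ : ℝ) = ⟪y, v⟫ := congrArg Prod.snd hxy
    refine ext_inner_right ℝ fun w => ?_
    have hw : w ∈ Submodule.span ℝ (Set.range ![u, v]) := by rw [hspan]; trivial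
    induction hw using Submodule.span_induction with
    | mem z hz =>
      obtain ⟨i, rfl⟩ := hz
      fin_cases i
      · exact h1
      · exact h2
    | zero => simp
    | add a b _ _ ha hb => rw [inner_add_right, inner_add_right, ha, hb]
    | smul c a _ ha => rw [inner_smul_right, inner_smul_right, ha]
  have hS := Set.Finite.preimage (hinj.injOn)
    ((A.toFinset.finite_toSet).prod (B.toFinset.finite_toSet))
  refine (Set.Finite.pi' (fun _ : Fin n => hS)).subset ?_
  rintro f ⟨hA, hB⟩ i
  refine ⟨?_, ?_⟩
  · simp only [Finset.mem_coe, Multiset.mem_toFinset, ← hA]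
    exact Multiset.mem_map_of_mem (fun i => (⟪f i, u⟫ : ℝ)) (Finset.mem_univ i)
  · simp only [Finset.mem_coe, Multiset.mem_toFinset, ← hB]
    exact Multiset.mem_map_of_mem (fun i => (⟪f i, v⟫ : ℝ)) (Finset.mem_univ i)
end
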